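/- If a projective line arrangement 𝓛 ⊂ ℂP² equals 𝓛' ∪ L where L is a simple line of 𝓛 and 𝓛' is nonempty, then π₁(ℂP² \ 𝓛) ≅ π₁(ℂP² \ 𝓛') × ℤ. -/

import Mathlib

open scoped Classical

/-- The complex projective plane. -/
abbrev CP2 := Projectivization ℂ (Fin 3 → ℂ)

noncomputable instance : TopologicalSpace CP2 := instTopologicalSpaceQuotient

/-- A projective line in `ℂP²`: the zero locus of a nonzero linear form. -/
def IsProjLine (l : Set CP2) : Prop :=
  ∃ a : Fin 3 → ℂ, a ≠ 0 ∧ l = {x : CP2 | ∑ i, a i * x.rep i = 0}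

set_option linter.unusedSectionVars false

namespace SL
open Set Topology

section cls
variable {E : Type*} [TopologicalSpace E]

/-- A curve: continuous on `[0,1]` with values in `F`. -/
def Curve (F : Set E) (ω : ℝ → E) : Prop :=
  ContinuousOn ω (Icc 0 1) ∧ MapsTo ω (Icc 0 1) F

theorem zero_mem_I : (0 : ℝ) ∈ Icc (0 : ℝ) 1 := ⟨le_rfl, zero_le_one⟩
theorem one_mem_I : (1 : ℝ) ∈ Icc (0 : ℝ) 1 := ⟨zero_le_one, le_rfl⟩

variable {F : Set E}

/-- The path of a curve. -/
def cpath {ω : ℝ → E} (h : Curve F ω) :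
    Path (⟨ω 0, h.2 zero_mem_I⟩ : F) ⟨ω 1, h.2 one_mem_I⟩ where
  toFun t := ⟨ω t, h.2 t.2⟩
  continuous_toFun := by
    refine Continuous.subtype_mk ?_ _
    exact continuousOn_iff_continuous_domRestrict.1 h.1
  source' := by simp
  target' := by simp

/-- frames -/
noncomputable def frame [PathConnectedSpace F] (b y : F) : Path.Homotopic.Quotient b y :=
  (Path.Homotopic.Quotient.mk (PathConnectedSpace.somePath b b)).symm.trans
    (Path.Homotopic.Quotient.mk (PathConnectedSpace.somePath b y))

theorem frame_self [PathConnectedSpace F] (b : F) :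
    frame b b = Path.Homotopic.Quotient.refl b := by
  simp [frame]

/-- framed class of an arrow -/
noncomputable def farr [PathConnectedSpace F] (b : F) {y z : F}
    (p : Path.Homotopic.Quotient y z) : FundamentalGroup F b :=
  (FundamentalGroup.fromPath (((frame b y).trans p).trans (frame b z).symm))⁻¹

theorem farr_trans [PathConnectedSpace F] (b : F) {x y z : F}
    (p : Path.Homotopic.Quotient x y) (q : Path.Homotopic.Quotient y z) :
    farr b (p.trans q) = farr b p * farr b q := by
  unfold farr
  rw [← mul_inv_rev]
  congr 1
  rw [FundamentalGroup.mul_def]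
  simp only [Path.Homotopic.Quotient.trans_assoc]
  congr 2
  rw [← Path.Homotopic.Quotient.trans_assoc (frame b y).symm]
  simp

theorem farr_cast [PathConnectedSpace F] (b : F) {x y x' y' : F}
    (p : Path.Homotopic.Quotient x y) (hx : x' = x) (hy : y' = y) :
    farr b (p.cast hx hy) = farr b p := by
  subst hx hy; simp

/-- class of a curve in the fundamental group -/
noncomputable def cls [PathConnectedSpace F] (b : F) (ω : ℝ → E) : FundamentalGroup F b :=
  if h : Curve F ω then farr b (Path.Homotopic.Quotient.mk (cpath h)) else 1

variable [PathConnectedSpace F] (b : F)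

theorem cls_of {ω : ℝ → E} (h : Curve F ω) :
    cls b ω = farr b (Path.Homotopic.Quotient.mk (cpath h)) := dif_pos h

theorem Curve.congr {ω ω' : ℝ → E} (h : Curve F ω) (e : EqOn ω' ω (Icc 0 1)) :
    Curve F ω' := ⟨h.1.congr e, h.2.congr e.symm⟩

theorem cls_congr {ω ω' : ℝ → E} (e : EqOn ω ω' (Icc 0 1)) : cls b ω = cls b ω' := by
  by_cases h : Curve F ω
  · have h' : Curve F ω' := h.congr e.symm
    rw [cls_of b h, cls_of b h']
    have hx : (⟨ω' 0, h'.2 zero_mem_I⟩ : F) = ⟨ω 0, h.2 zero_mem_I⟩ := by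
      simp [e zero_mem_I]
    have hy : (⟨ω' 1, h'.2 one_mem_I⟩ : F) = ⟨ω 1, h.2 one_mem_I⟩ := by
      simp [e one_mem_I]
    rw [← farr_cast b (Path.Homotopic.Quotient.mk (cpath h)) hx hy]
    congr 1
    rw [← Path.Homotopic.Quotient.mk_cast]
    congr 1
    ext t
    simp [cpath, e t.2]
  · have h' : ¬ Curve F ω' := fun h' => h (h'.congr e)
    simp [cls, h, h']

theorem cls_loop {ω : ℝ → E} (p : Path b b) (hp : ∀ t : unitInterval, ω t = p t) :
    cls b ω = (FundamentalGroup.fromPath (Path.Homotopic.Quotient.mk p))⁻¹ := by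
  have h : Curve F ω := by
    constructor
    · rw [continuousOn_iff_continuous_domRestrict]
      have : (Icc (0 : ℝ) 1).domRestrict ω = fun t => ((p t : F) : E) := by
        ext t; exact hp t
      rw [this]; fun_prop
    · intro t ht
      have := hp ⟨t, ht⟩
      simp only at this
      rw [this]; exact (p _).2
  rw [cls_of b h]
  have hx : b = (⟨ω 0, h.2 zero_mem_I⟩ : F) := by
    have := hp 0; simp at this; ext; exact this.symm
  have hy : b = (⟨ω 1, h.2 one_mem_I⟩ : F) := by
    have := hp 1; simp at this; ext; exact this.symm
  rw [← farr_cast b _ hx hy]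
  rw [← Path.Homotopic.Quotient.mk_cast]
  have : (cpath h).cast hx hy = p := by
    ext t; simp [cpath, hp t]
  rw [this]
  simp only [farr, frame_self, Path.Homotopic.Quotient.refl_trans]
  congr 1
  rw [← Path.Homotopic.Quotient.mk_refl, ← Path.Homotopic.Quotient.mk_symm, Path.refl_symm,
    Path.Homotopic.Quotient.mk_refl, Path.Homotopic.Quotient.trans_refl]

theorem cls_surj (g : FundamentalGroup F b) :
    ∃ ω : ℝ → E, Curve F ω ∧ ω 0 = b ∧ ω 1 = b ∧ cls b ω = g := by
  obtain ⟨p, hp⟩ := Path.Homotopic.Quotient.mk_surjective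
    (FundamentalGroup.toPath (g⁻¹ : FundamentalGroup F b))
  refine ⟨fun t => (p.extend t : F), ⟨?_, ?_⟩, by simp, by simp, ?_⟩
  · fun_prop
  · intro t _; exact Subtype.property _
  · rw [cls_loop b p]
    · rw [hp]; exact inv_inv g
    · intro t; simp

theorem cls_const (x : E) : cls b (fun _ => x) = 1 := by
  by_cases h : Curve F (fun _ => x)
  · rw [cls_of b h]
    have : cpath h = Path.refl _ := by ext t; rfl
    rw [this]
    simp [farr]
    rfl
  · simp [cls, h]

section tri
variable {E' : Type*} [AddCommGroup E'] [Module ℝ E'] [TopologicalSpace E']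
  [IsTopologicalAddGroup E'] [ContinuousSMul ℝ E']

noncomputable def seg (a c : E') (t : ℝ) : E' := AffineMap.lineMap a c t

theorem seg_mem {K : Set E'} (hK : Convex ℝ K) {a c : E'} (ha : a ∈ K) (hc : c ∈ K)
    {t : ℝ} (ht : t ∈ Icc (0 : ℝ) 1) : seg a c t ∈ K :=
  hK.lineMap_mem ha hc ht

theorem seg_def (a c : E') (t : ℝ) : seg a c t = a + t • (c - a) := by
  simp [seg, AffineMap.lineMap_apply, add_comm]

theorem seg_cont (a c : E') : Continuous (seg a c) := by
  have : seg a c = fun t => a + t • (c - a) := funext (seg_def a c)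
  rw [this]; fun_prop

@[simp] theorem seg_zero (a c : E') : seg a c 0 = a := by simp [seg]
@[simp] theorem seg_one (a c : E') : seg a c 1 = c := by simp [seg]
@[simp] theorem seg_self (a : E') (t : ℝ) : seg a a t = a := by simp [seg]

theorem curve_seg {K : Set E'} (hK : Convex ℝ K) {f : E' → E} (hf : ContinuousOn f K)
    (hm : MapsTo f K F) {a c : E'} (ha : a ∈ K) (hc : c ∈ K) : Curve F (f ∘ seg a c) :=
  ⟨hf.comp (seg_cont a c).continuousOn (fun _ ht => seg_mem hK ha hc ht),
    fun _ ht => hm (seg_mem hK ha hc ht)⟩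

theorem cls_tri {K : Set E'} (hK : Convex ℝ K) {f : E' → E} (hf : ContinuousOn f K)
    (hm : MapsTo f K F) {x y z : E'} (hx : x ∈ K) (hy : y ∈ K) (hz : z ∈ K) :
    cls b (f ∘ seg x y) * cls b (f ∘ seg y z) = cls b (f ∘ seg x z) := by
  have h1 := curve_seg hK hf hm hx hy
  have h2 := curve_seg hK hf hm hy hz
  have h3 := curve_seg hK hf hm hx hz
  rw [cls_of b h1, cls_of b h2, cls_of b h3]
  let g : C(K, F) := ⟨fun k => ⟨f k, hm k.2⟩,
    (continuousOn_iff_continuous_domRestrict.1 hf).subtype_mk _⟩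
  let sp : ∀ (u v : K), Path u v := fun u v =>
    { toFun := fun t => ⟨seg u v t, seg_mem hK u.2 v.2 t.2⟩
      continuous_toFun := by
        refine Continuous.subtype_mk ?_ _
        exact (seg_cont _ _).comp continuous_subtype_val
      source' := by simp
      target' := by simp }
  have key : ∀ (u v : K) (h : Curve F (f ∘ seg (u : E') v)),
      farr b (Path.Homotopic.Quotient.mk (cpath h)) =
      farr b (Path.Homotopic.Quotient.mk ((sp u v).map g.continuous)) := by
    intro u v h
    have hx : g u = (⟨(f ∘ seg (u : E') v) 0, h.2 zero_mem_I⟩ : F) := by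
      ext; simp only [Function.comp, seg_zero, seg_one]; rfl
    have hy : g v = (⟨(f ∘ seg (u : E') v) 1, h.2 one_mem_I⟩ : F) := by
      ext; simp only [Function.comp, seg_zero, seg_one]; rfl
    rw [← farr_cast b (Path.Homotopic.Quotient.mk (cpath h)) hx hy,
      ← Path.Homotopic.Quotient.mk_cast]
    congr 1
  rw [key ⟨x, hx⟩ ⟨y, hy⟩ h1, key ⟨y, hy⟩ ⟨z, hz⟩ h2, key ⟨x, hx⟩ ⟨z, hz⟩ h3, ← farr_trans]
  congr 1
  have : ContractibleSpace K := hK.contractibleSpace ⟨x, hx⟩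
  rw [← Path.Homotopic.Quotient.mk_trans, Path.Homotopic.Quotient.eq, ← Path.map_trans]
  exact (SimplyConnectedSpace.paths_homotopic _ _).map g

theorem cls_seg_inv {K : Set E'} (hK : Convex ℝ K) {f : E' → E} (hf : ContinuousOn f K)
    (hm : MapsTo f K F) {x y : E'} (hx : x ∈ K) (hy : y ∈ K) :
    cls b (f ∘ seg y x) = (cls b (f ∘ seg x y))⁻¹ := by
  rw [eq_inv_iff_mul_eq_one, cls_tri b hK hf hm hy hx hy]
  have : f ∘ seg y y = fun _ => f y := by ext t; simp
  rw [this, cls_const]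

end tri

/-- subdivision of a curve at times `r s t`. -/
theorem cls_sub {ω : ℝ → E} (h : Curve F ω) {r s t : ℝ} (hr : r ∈ Icc (0:ℝ) 1)
    (hs : s ∈ Icc (0:ℝ) 1) (ht : t ∈ Icc (0:ℝ) 1) :
    cls b (ω ∘ seg r s) * cls b (ω ∘ seg s t) = cls b (ω ∘ seg r t) :=
  cls_tri b (convex_Icc 0 1) h.1 h.2 hr hs ht

theorem comp_seg01 (ω : ℝ → E) : ω ∘ seg (0:ℝ) 1 = ω := by
  ext t; simp [seg_def]

theorem cls_square {H : ℝ × ℝ → E} (hc : ContinuousOn H (Icc 0 1 ×ˢ Icc 0 1))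
    (hm : MapsTo H (Icc 0 1 ×ˢ Icc 0 1) F) :
    cls b (fun t => H (t, 0)) * cls b (fun t => H (1, t)) =
    cls b (fun t => H (0, t)) * cls b (fun t => H (t, 1)) := by
  have hK : Convex ℝ (Icc (0:ℝ) 1 ×ˢ Icc (0:ℝ) 1) := (convex_Icc 0 1).prod (convex_Icc 0 1)
  have m : ∀ {x y : ℝ}, x ∈ Icc (0:ℝ) 1 → y ∈ Icc (0:ℝ) 1 →
    ((x, y) : ℝ × ℝ) ∈ Icc (0:ℝ) 1 ×ˢ Icc (0:ℝ) 1 := fun h h' => ⟨h, h'⟩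
  have e1 := cls_tri b hK hc hm (m zero_mem_I zero_mem_I) (m one_mem_I zero_mem_I)
    (m one_mem_I one_mem_I)
  have e2 := cls_tri b hK hc hm (m zero_mem_I zero_mem_I) (m zero_mem_I one_mem_I)
    (m one_mem_I one_mem_I)
  rw [← e2] at e1
  convert e1 using 3 <;> · ext t; simp [seg_def]

/-- concatenation -/
theorem exists_cat {F' : Type*} [TopologicalSpace F'] {α β : ℝ → F'}
    (hα : ContinuousOn α (Icc 0 1)) (hβ : ContinuousOn β (Icc 0 1)) (h : α 1 = β 0) :
    ∃ γ : ℝ → F', ContinuousOn γ (Icc 0 1) ∧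
      (∀ t ∈ Icc (0:ℝ) 1, γ (seg 0 (1/2) t) = α t) ∧
      (∀ t ∈ Icc (0:ℝ) 1, γ (seg (1/2) 1 t) = β t) ∧
      γ 0 = α 0 ∧ γ 1 = β 1 ∧
      (∀ t ∈ Icc (0:ℝ) 1, (∃ s ∈ Icc (0:ℝ) 1, γ t = α s) ∨ (∃ s ∈ Icc (0:ℝ) 1, γ t = β s)) := by
  refine ⟨fun t => if t ≤ 1/2 then α (2*t) else β (2*t-1), ?_, ?_, ?_, ?_, ?_, ?_⟩
  · have hu : Icc (0:ℝ) 1 = Icc 0 (1/2) ∪ Icc (1/2) 1 := by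
      rw [Icc_union_Icc_eq_Icc] <;> norm_num
    rw [hu]
    apply ContinuousOn.union_of_isClosed _ _ isClosed_Icc isClosed_Icc
    · apply ContinuousOn.congr (f := fun t => α (2*t))
      · apply hα.comp (by fun_prop)
        intro t ht; simp only [mem_Icc] at *; constructor <;> linarith [ht.1, ht.2]
      · intro t ht; simp only [mem_Icc] at ht; simp only; rw [if_pos ht.2]
    · apply ContinuousOn.congr (f := fun t => β (2*t-1))
      · apply hβ.comp (by fun_prop)
        intro t ht; simp only [mem_Icc] at *; constructor <;> linarith [ht.1, ht.2]
      · intro t ht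
        simp only [mem_Icc] at ht
        simp only
        split_ifs with h1
        · have : t = 1/2 := le_antisymm h1 ht.1
          subst this
          norm_num [h]
        · rfl
  · intro t ht
    simp only [seg_def, smul_eq_mul]
    rw [if_pos (by linarith [ht.2])]
    congr 1; ring
  · intro t ht
    simp only [seg_def, smul_eq_mul]
    split_ifs with h1
    · have : t = 0 := le_antisymm (by linarith) ht.1
      subst this; norm_num [h]
    · congr 1; ring
  · norm_num
  · norm_num
  · intro t ht
    simp only
    split_ifs with h1
    · left; exact ⟨2*t, ⟨by linarith [ht.1], by linarith⟩, rfl⟩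
    · right; exact ⟨2*t-1, ⟨by linarith, by linarith [ht.2]⟩, rfl⟩

/-- A curve in a convex subset has the class of the segment. -/
theorem cls_convex {E : Type*} [AddCommGroup E] [Module ℝ E] [TopologicalSpace E]
    [IsTopologicalAddGroup E] [ContinuousSMul ℝ E] {F : Set E} [PathConnectedSpace F] (b : F)
    {K : Set E} (hK : Convex ℝ K) (hKF : K ⊆ F) {ω : ℝ → E} (h : Curve K ω) :
    cls b ω = cls b (seg (ω 0) (ω 1)) := by
  have := cls_square b (F := F) (H := fun p => seg (ω p.1) (seg (ω 0) (ω 1) p.1) p.2) ?_ ?_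
  · simp only [seg_zero, seg_one, seg_self, cls_const, mul_one, one_mul] at this
    exact this
  · have : (fun p : ℝ × ℝ => seg (ω p.1) (seg (ω 0) (ω 1) p.1) p.2) =
      fun p : ℝ × ℝ => ω p.1 + p.2 • (seg (ω 0) (ω 1) p.1 - ω p.1) := by
        ext p; exact seg_def _ _ _
    rw [this]
    have h1 : ContinuousOn (fun p : ℝ × ℝ => ω p.1) (Icc 0 1 ×ˢ Icc 0 1) :=
      h.1.comp continuousOn_fst (fun p hp => hp.1)
    have h2 : Continuous (fun p : ℝ × ℝ => seg (ω 0) (ω 1) p.1) :=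
      (seg_cont _ _).comp continuous_fst
    exact h1.add (continuousOn_snd.smul (h2.continuousOn.sub h1))
  · intro p hp
    exact hKF (seg_mem hK (h.2 hp.1) (seg_mem hK (h.2 zero_mem_I) (h.2 one_mem_I) hp.1) hp.2)

end cls
end SL

namespace SL
open Set Topology
set_option linter.unusedSectionVars false

theorem exists_fine {V E : Type*} [PseudoMetricSpace V] [TopologicalSpace E]
    {X : Set E} {C : Set V} (hC : IsCompact C) {H : V → E} (hH : Continuous H)
    (hX : ∀ x, H x ∈ X) (P : Set E → Prop)
    (hP : ∀ p ∈ X, ∃ U ∈ 𝓝 p, P U) :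
    ∃ δ > 0, ∀ x ∈ C, ∃ U, P U ∧ MapsTo H (Metric.ball x δ) U := by
  choose! U hU hPU using hP
  have := lebesgue_number_lemma_of_metric (s := C) (c := fun x : V => interior (H ⁻¹' (U (H x)))) hC
    (fun _ => isOpen_interior) (fun x _ => mem_iUnion.2 ⟨x, mem_interior_iff_mem_nhds.2
      (hH.continuousAt.preimage_mem_nhds (hU _ (hX x)))⟩)
  obtain ⟨δ, h0, h⟩ := this
  refine ⟨δ, h0, fun x hx => ?_⟩
  obtain ⟨i, hi⟩ := h x hx
  exact ⟨U (H i), hPU _ (hX i), fun y hy => show y ∈ H ⁻¹' U (H i) from interior_subset (hi hy)⟩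

section loc
variable {E : Type*} [TopologicalSpace E] {F : Set E} [PathConnectedSpace F] (b : F)

theorem cls_local (S : Subgroup (FundamentalGroup F b)) (k : E → FundamentalGroup F b)
    (hloc : ∀ p ∈ F, ∃ U ∈ 𝓝 p, ∀ ω : ℝ → E, Curve F ω → MapsTo ω (Icc 0 1) U →
      k (ω 0) * cls b ω * (k (ω 1))⁻¹ ∈ S) {ω : ℝ → E} (h : Curve F ω) :
    k (ω 0) * cls b ω * (k (ω 1))⁻¹ ∈ S := by
  let H : ℝ → E := fun t => ω (projIcc 0 1 zero_le_one t)
  have hHc : Continuous H :=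
    (continuousOn_iff_continuous_domRestrict.1 h.1).comp continuous_projIcc
  have hH : ∀ t ∈ Icc (0:ℝ) 1, H t = ω t := fun t ht => by
    simp [H, projIcc_of_mem zero_le_one ht]
  obtain ⟨δ, h0, hδ⟩ := exists_fine (C := Icc (0:ℝ) 1) isCompact_Icc hHc
    (X := F) (fun t => h.2 (Subtype.property _)) _ hloc
  obtain ⟨n, hn⟩ := exists_nat_one_div_lt h0
  have hn0 : (0:ℝ) < n + 1 := by positivity
  have key : ∀ i : ℕ, i ≤ n + 1 → k (ω 0) * cls b (ω ∘ seg 0 (i / (n+1) : ℝ)) *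
      (k (ω (i/(n+1) : ℝ)))⁻¹ ∈ S := by
    intro i
    induction i with
    | zero =>
      intro _
      have : ω ∘ seg (0:ℝ) 0 = fun _ => ω 0 := by ext t; simp
      rw [Nat.cast_zero, zero_div, this, cls_const, mul_one, mul_inv_cancel]
      exact S.one_mem
    | succ i ih =>
      intro hi
      have hi' : ((i:ℝ) + 1) ≤ n + 1 := by exact_mod_cast hi
      have m1 : (i / (n+1) : ℝ) ∈ Icc (0:ℝ) 1 :=
        ⟨by positivity, by rw [div_le_one hn0]; linarith⟩
      have m2 : ((i+1 : ℕ) / (n+1) : ℝ) ∈ Icc (0:ℝ) 1 :=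
        ⟨by positivity, by rw [div_le_one hn0]; push_cast; linarith⟩
      rw [← cls_sub b h zero_mem_I m1 m2]
      obtain ⟨U, hU, hmap⟩ := hδ _ m1
      have hcur : Curve F (ω ∘ seg (i / (n+1) : ℝ) ((i+1 : ℕ) / (n+1) : ℝ)) :=
        curve_seg (convex_Icc 0 1) h.1 h.2 m1 m2
      have := hU _ hcur (fun t ht => by
        have hm := seg_mem (convex_Icc (0:ℝ) 1) m1 m2 ht
        have := hmap (x := seg (i / (n+1) : ℝ) ((i+1 : ℕ) / (n+1) : ℝ) t) (by
          rw [Metric.mem_ball, Real.dist_eq, seg_def]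
          have e : (i / (n+1) : ℝ) + t • (((i+1:ℕ) / (n+1) : ℝ) - i/(n+1)) - i/(n+1)
              = t * (1/(n+1)) := by
            push_cast; rw [smul_eq_mul]; field_simp; ring
          rw [e, abs_of_nonneg (mul_nonneg ht.1 (by positivity))]
          have : t * (1/(n+1) : ℝ) ≤ 1 * (1/(n+1)) :=
            mul_le_mul_of_nonneg_right ht.2 (by positivity)
          linarith)
        rw [hH _ hm] at this
        exact this)
      have h2 := S.mul_mem (ih (by omega)) this
      simp only [Function.comp, seg_zero, seg_one] at h2 ⊢
      convert h2 using 1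
      group
  have := key (n+1) le_rfl
  have e : ((n+1 : ℕ) / (n+1) : ℝ) = 1 := by push_cast; field_simp
  rwa [e, comp_seg01] at this

theorem grid_null {Q : Type*} [Group Q] {X : Set E} (e : (ℝ → E) → Q)
    (hconst : ∀ x ∈ X, e (fun _ => x) = 1)
    (hloc : ∀ p ∈ X, ∃ U ∈ 𝓝 p, ∀ (K : Set (ℝ × ℝ)) (f : ℝ × ℝ → E), Convex ℝ K →
      ContinuousOn f K → MapsTo f K X → MapsTo f K U → ∀ x ∈ K, ∀ y ∈ K, ∀ z ∈ K,
      e (f ∘ seg x y) * e (f ∘ seg y z) = e (f ∘ seg x z))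
    {H : ℝ × ℝ → E} (hH : Continuous H) (hX : ∀ x, H x ∈ X) {p : E}
    (h0 : ∀ t, H (0, t) = p) (h1 : ∀ t, H (1, t) = p) (ht : ∀ s, H (s, 1) = p)
    (hb : ∀ r ∈ Icc (0:ℝ) 1, ∀ s ∈ Icc (0:ℝ) 1, ∀ t ∈ Icc (0:ℝ) 1,
      e ((fun x => H (x, 0)) ∘ seg r s) * e ((fun x => H (x, 0)) ∘ seg s t)
        = e ((fun x => H (x, 0)) ∘ seg r t)) :
    e (fun x => H (x, 0)) = 1 := by
  have hp : p ∈ X := h0 0 ▸ hX _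
  obtain ⟨δ, hδ0, hδ⟩ := exists_fine (C := Icc (0:ℝ) 1 ×ˢ Icc (0:ℝ) 1)
    (isCompact_Icc.prod isCompact_Icc) hH hX _ hloc
  obtain ⟨n, hn⟩ := exists_nat_one_div_lt hδ0
  have hn0 : (0:ℝ) < n + 1 := by positivity
  let a : ℕ → ℝ := fun i => i / (n+1)
  have a0 : a 0 = 0 := by simp [a]
  have a1 : a (n+1) = 1 := by simp only [a]; push_cast; field_simp
  have am : ∀ i, i ≤ n + 1 → a i ∈ Icc (0:ℝ) 1 := fun i hi =>
    ⟨by positivity, by simp only [a]; rw [div_le_one hn0]; exact_mod_cast hi⟩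
  have as : ∀ i, a (i+1) = a i + 1/(n+1) := fun i => by simp only [a]; push_cast; ring
  -- cell identity
  have cell : ∀ i j, i < n + 1 → j < n + 1 →
      e (H ∘ seg (a i, a j) (a (i+1), a j)) * e (H ∘ seg (a (i+1), a j) (a (i+1), a (j+1))) =
      e (H ∘ seg (a i, a j) (a i, a (j+1))) * e (H ∘ seg (a i, a (j+1)) (a (i+1), a (j+1))) := by
    intro i j hi hj
    obtain ⟨U, hU, hmap⟩ := hδ (a i, a j) ⟨am i hi.le, am j hj.le⟩
    have hpos : (0:ℝ) < 1/(n+1) := by positivity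
    have mem : ∀ u v : ℝ, (u = a i ∨ u = a (i+1)) → (v = a j ∨ v = a (j+1)) →
        (u, v) ∈ Metric.ball (a i, a j) δ := by
      intro u v hu hv
      rw [Metric.mem_ball, Prod.dist_eq, max_lt_iff, Real.dist_eq, Real.dist_eq]
      constructor
      · rcases hu with rfl | rfl
        · simpa using hδ0
        · rw [as]; simp only [add_sub_cancel_left]; rw [abs_of_pos hpos]; exact hn
      · rcases hv with rfl | rfl
        · simpa using hδ0
        · rw [as]; simp only [add_sub_cancel_left]; rw [abs_of_pos hpos]; exact hn
    have hcv : Convex ℝ (Metric.ball ((a i, a j) : ℝ × ℝ) δ) := convex_ball _ _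
    have T := hU _ H hcv hH.continuousOn (fun x _ => hX x) hmap
    rw [T _ (mem (a i) (a j) (.inl rfl) (.inl rfl)) _ (mem (a (i+1)) (a j) (.inr rfl) (.inl rfl))
      _ (mem (a (i+1)) (a (j+1)) (.inr rfl) (.inr rfl)),
      T _ (mem (a i) (a j) (.inl rfl) (.inl rfl)) _ (mem (a i) (a (j+1)) (.inl rfl) (.inr rfl))
      _ (mem (a (i+1)) (a (j+1)) (.inr rfl) (.inr rfl))]
  let row : ℕ → ℕ → Q := fun j i => Nat.rec 1 (fun i q => q * e (H ∘ seg (a i, a j) (a (i+1), a j))) i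
  have row0 : ∀ j, row j 0 = 1 := fun _ => rfl
  have rows : ∀ j i, row j (i+1) = row j i * e (H ∘ seg (a i, a j) (a (i+1), a j)) := fun _ _ => rfl
  have left : ∀ v w : ℝ, e (H ∘ seg (0, v) (0, w)) = 1 := by
    intro v w
    have : H ∘ seg (0, v) (0, w) = fun _ => p := by
      ext t; simp [seg_def, h0]
    rw [this, hconst p hp]
  have right : ∀ v w : ℝ, e (H ∘ seg (1, v) (1, w)) = 1 := by
    intro v w
    have : H ∘ seg (1, v) (1, w) = fun _ => p := by
      ext t; simp [seg_def, h1]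
    rw [this, hconst p hp]
  have top : ∀ v w : ℝ, e (H ∘ seg (v, 1) (w, 1)) = 1 := by
    intro v w
    have : H ∘ seg (v, 1) (w, 1) = fun _ => p := by
      ext t; simp [seg_def, ht]
    rw [this, hconst p hp]
  have step : ∀ j, j < n + 1 → ∀ i, i ≤ n + 1 →
      row j i * e (H ∘ seg (a i, a j) (a i, a (j+1))) = row (j+1) i := by
    intro j hj i
    induction i with
    | zero => intro _; simp [row0, a0, left]
    | succ i ih =>
      intro hi
      rw [rows, rows, ← ih (by omega), mul_assoc, cell i j (by omega) hj, mul_assoc]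
  have step' : ∀ j, j < n+1 → row j (n+1) = row (j+1) (n+1) := by
    intro j hj
    have := step j hj (n+1) le_rfl
    rwa [a1, right, mul_one] at this
  have all : ∀ j, j ≤ n + 1 → row 0 (n+1) = row j (n+1) := by
    intro j
    induction j with
    | zero => intro _; rfl
    | succ j ih => intro hj; rw [ih (by omega), step' j (by omega)]
  have last : ∀ i, row (n+1) i = 1 := by
    intro i
    induction i with
    | zero => rfl
    | succ i ih => rw [rows, ih, a1, top, mul_one]
  have bot : ∀ i, i ≤ n + 1 → row 0 i = e ((fun x => H (x, 0)) ∘ seg 0 (a i)) := by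
    intro i
    induction i with
    | zero =>
      intro _
      have : (fun x => H (x, 0)) ∘ seg 0 (a 0) = fun _ => p := by
        ext t; simp [a0, h0]
      rw [this, hconst p hp, row0]
    | succ i ih =>
      intro hi
      rw [rows, ih (by omega), ← hb 0 zero_mem_I (a i) (am _ (by omega)) (a (i+1)) (am _ hi)]
      congr 2
      ext t; simp [seg_def, a0]
  have := bot (n+1) le_rfl
  rw [a1, comp_seg01] at this
  rw [← this, all (n+1) le_rfl]; exact last (n+1)

end loc

section map
variable {E E' : Type*} [TopologicalSpace E] [TopologicalSpace E'] {F : Set E} {X : Set E'}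
  [PathConnectedSpace F] [PathConnectedSpace X]

theorem map_cls {b : F} (f : C(F, X)) (f0 : E → E') (hf : ∀ p : F, f0 p = f p)
    {ω : ℝ → E} (h : Curve F ω) (h0 : ω 0 = b) (h1 : ω 1 = b) :
    FundamentalGroup.map f b (cls b ω) = cls (f b) (f0 ∘ ω) := by
  have e0 : b = (⟨ω 0, h.2 zero_mem_I⟩ : F) := Subtype.ext h0.symm
  have e1 : b = (⟨ω 1, h.2 one_mem_I⟩ : F) := Subtype.ext h1.symm
  rw [cls_loop b ((cpath h).cast e0 e1) (fun t => rfl),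
    cls_loop (f b) (((cpath h).cast e0 e1).map f.continuous) (fun t => by
      simp only [Function.comp, Path.map_coe]
      rw [← hf]; rfl), map_inv]
  rfl

theorem exists_null {b : F} {ω : ℝ → E} (h : Curve F ω) (h0 : ω 0 = b) (h1 : ω 1 = b)
    (hc : cls b ω = 1) : ∃ H : ℝ × ℝ → E, Continuous H ∧ (∀ x, H x ∈ F) ∧
      (∀ t, H (0, t) = b) ∧ (∀ t, H (1, t) = b) ∧ (∀ s, H (s, 1) = b) ∧
      EqOn (fun x => H (x, 0)) ω (Icc 0 1) := by
  have e0 : b = (⟨ω 0, h.2 zero_mem_I⟩ : F) := Subtype.ext h0.symm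
  have e1 : b = (⟨ω 1, h.2 one_mem_I⟩ : F) := Subtype.ext h1.symm
  rw [cls_loop b ((cpath h).cast e0 e1) (fun t => rfl), inv_eq_one] at hc
  have hc' : Path.Homotopic.Quotient.mk ((cpath h).cast e0 e1) =
    Path.Homotopic.Quotient.mk (Path.refl b) := hc
  rw [Path.Homotopic.Quotient.eq] at hc'
  obtain ⟨K⟩ := hc'
  refine ⟨fun x => (K (projIcc 0 1 zero_le_one x.2, projIcc 0 1 zero_le_one x.1) : F), ?_,
    fun x => Subtype.property _, ?_, ?_, ?_, ?_⟩
  · fun_prop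
  · intro t; simp
  · intro t; simp
  · intro s; simp
  · intro t ht
    simp only [projIcc_of_mem zero_le_one ht, projIcc_left]
    have := K.apply_zero ⟨t, ht⟩
    rw [show ((⟨0, zero_mem_I⟩ : unitInterval)) = 0 from rfl]
    rw [this]; rfl

end map
end SL

namespace SL
open Set Topology
set_option linter.unusedSectionVars false

theorem push {ι : Type*} [Fintype ι] (p : ι → ℂ) {ρ : ℝ} (hρ : 0 < ρ)
    (hsep : ∀ i j, i ≠ j → 2 * ρ < ‖p i - p j‖) :
    ∃ P : ℝ → ℂ → ℂ, ContinuousOn (fun q : ℝ × ℂ => P q.1 q.2) {q | ∀ i, q.2 ≠ p i} ∧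
      (∀ u ∈ Icc (0:ℝ) 1, ∀ y, (∀ i, y ≠ p i) → ∀ i, P u y ≠ p i) ∧
      (∀ y, P 0 y = y) ∧ (∀ y, (∀ i, y ≠ p i) → ∀ i, ρ ≤ ‖P 1 y - p i‖) ∧
      (∀ u y, (∀ i, ρ ≤ ‖y - p i‖) → P u y = y) := by
  let P : ℝ → ℂ → ℂ := fun u y =>
    y + u * ∑ i, ((max 0 (ρ / ‖y - p i‖ - 1) : ℝ) : ℂ) * (y - p i)
  have hid : ∀ u y, (∀ i, ρ ≤ ‖y - p i‖) → P u y = y := by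
    intro u y h
    have : ∑ i, ((max 0 (ρ / ‖y - p i‖ - 1) : ℝ) : ℂ) * (y - p i) = 0 := by
      refine Finset.sum_eq_zero fun i _ => ?_
      have : ρ / ‖y - p i‖ ≤ 1 := by
        rw [div_le_one (hρ.trans_le (h i))]; exact h i
      rw [max_eq_left (by linarith)]; simp
    simp [P, this]
  have hone : ∀ u y i, y ≠ p i → ‖y - p i‖ < ρ →
      P u y - p i = ((1 + u * (ρ / ‖y - p i‖ - 1) : ℝ) : ℂ) * (y - p i) := by
    intro u y i hy h
    have hpos : 0 < ‖y - p i‖ := norm_pos_iff.2 (sub_ne_zero.2 hy)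
    have : ∑ i, ((max 0 (ρ / ‖y - p i‖ - 1) : ℝ) : ℂ) * (y - p i) =
        ((ρ / ‖y - p i‖ - 1 : ℝ) : ℂ) * (y - p i) := by
      rw [Finset.sum_eq_single i]
      · have : 1 ≤ ρ / ‖y - p i‖ := by rw [one_le_div hpos]; exact h.le
        rw [max_eq_right (by linarith)]
      · intro j _ hj
        have h1 := hsep i j hj.symm
        have h2 : ‖p i - p j‖ ≤ ‖y - p i‖ + ‖y - p j‖ := by
          have := norm_sub_le (y - p j) (y - p i)
          simp only [sub_sub_sub_cancel_left] at this
          linarith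
        have h3 : ρ ≤ ‖y - p j‖ := by linarith
        have : ρ / ‖y - p j‖ ≤ 1 := by
          rw [div_le_one (hρ.trans_le h3)]; exact h3
        rw [max_eq_left (by linarith)]; simp
      · simp
    simp only [P, this]
    push_cast
    ring
  have hnorm : ∀ u ∈ Icc (0:ℝ) 1, ∀ y i, y ≠ p i → ‖y - p i‖ < ρ →
      ‖P u y - p i‖ = ‖y - p i‖ + u * (ρ - ‖y - p i‖) := by
    intro u hu y i hy h
    have hpos : 0 < ‖y - p i‖ := norm_pos_iff.2 (sub_ne_zero.2 hy)
    have h1 : 1 ≤ ρ / ‖y - p i‖ := by rw [one_le_div hpos]; exact h.le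
    rw [hone u y i hy h, norm_mul, Complex.norm_real, Real.norm_eq_abs, abs_of_nonneg]
    · field_simp
    · have := mul_nonneg hu.1 (sub_nonneg.2 h1); linarith
  have hall : ∀ u ∈ Icc (0:ℝ) 1, ∀ y, (∀ i, y ≠ p i) → ∀ i,
      0 < ‖P u y - p i‖ ∧ (u = 1 → ρ ≤ ‖P u y - p i‖) := by
    intro u hu y hy j
    by_cases hex : ∃ i, ‖y - p i‖ < ρ
    · obtain ⟨i, hi⟩ := hex
      have hn := hnorm u hu y i (hy i) hi
      have hpos : 0 < ‖y - p i‖ := norm_pos_iff.2 (sub_ne_zero.2 (hy i))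
      by_cases hij : j = i
      · subst hij
        rw [hn]
        refine ⟨by have := mul_nonneg hu.1 (sub_nonneg.2 hi.le); linarith, ?_⟩
        rintro rfl; linarith
      · have h1 := hsep i j (Ne.symm hij)
        have h2 : ‖p i - p j‖ ≤ ‖P u y - p i‖ + ‖P u y - p j‖ := by
          have := norm_sub_le (P u y - p j) (P u y - p i)
          simp only [sub_sub_sub_cancel_left] at this
          linarith
        have h3 : ‖P u y - p i‖ ≤ ρ := by
          rw [hn]
          have := mul_le_mul_of_nonneg_right hu.2 (sub_nonneg.2 hi.le)
          linarith
        exact ⟨by linarith, fun _ => by linarith⟩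
    · push Not at hex
      rw [hid u y hex]
      exact ⟨hρ.trans_le (hex j), fun _ => hex j⟩
  refine ⟨P, ?_, ?_, ?_, ?_, hid⟩
  · refine ContinuousOn.add (by fun_prop) (ContinuousOn.mul (by fun_prop) ?_)
    refine continuousOn_finsetSum _ fun i _ => ContinuousOn.mul ?_ (by fun_prop)
    refine Complex.continuous_ofReal.comp_continuousOn ?_
    refine (continuous_const.max continuous_id).comp_continuousOn (g := fun r : ℝ => max 0 r)
      (ContinuousOn.sub (ContinuousOn.div continuousOn_const (by fun_prop) ?_) continuousOn_const)
    intro q hq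
    exact (norm_pos_iff.2 (sub_ne_zero.2 (hq i))).ne'
  · intro u hu y hy i
    exact sub_ne_zero.1 (norm_pos_iff.1 (hall u hu y hy i).1)
  · intro y; simp [P]
  · intro y hy i; exact (hall 1 one_mem_I y hy i).2 rfl

section setup
variable {ι : Type*} [Fintype ι] (m c : ι → ℂ)

/-- affine arrangement complement -/
def FF : Set (ℂ × ℂ) := {p | ∀ i, p.2 ≠ m i * p.1 + c i}

noncomputable def S0 (x : ℂ) : ℝ := ∑ i, (‖m i‖ * ‖x‖ + ‖c i‖)

def Om : Set (ℂ × ℂ) := {p | S0 m c p.1 < p.2.re}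

theorem S0_le (x : ℂ) (i : ι) : ‖m i * x + c i‖ ≤ S0 m c x := by
  have : ‖m i‖ * ‖x‖ + ‖c i‖ ≤ S0 m c x :=
    Finset.single_le_sum (f := fun i => ‖m i‖ * ‖x‖ + ‖c i‖) (fun i _ => by positivity)
      (Finset.mem_univ i)
  exact ((norm_add_le _ _).trans (by rw [norm_mul])).trans this

theorem S0_cont : Continuous (S0 m c) := by unfold S0; fun_prop

theorem Om_sub : Om m c ⊆ FF m c := by
  intro p hp i h
  have h1 := S0_le m c p.1 i
  rw [← h] at h1
  have h2 : p.2.re ≤ ‖p.2‖ := Complex.re_le_norm _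
  have h3 : S0 m c p.1 < p.2.re := hp
  linarith

theorem Om_convex : Convex ℝ (Om m c) := by
  intro p hp q hq s t hs ht hst
  have hp' : S0 m c p.1 < p.2.re := hp
  have hq' : S0 m c q.1 < q.2.re := hq
  have hle : S0 m c (s • p.1 + t • q.1) ≤ s * S0 m c p.1 + t * S0 m c q.1 := by
    unfold S0
    rw [Finset.mul_sum, Finset.mul_sum, ← Finset.sum_add_distrib]
    refine Finset.sum_le_sum fun i _ => ?_
    have h1 : ‖s • p.1 + t • q.1‖ ≤ s * ‖p.1‖ + t * ‖q.1‖ := by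
      refine (norm_add_le _ _).trans ?_
      rw [norm_smul, norm_smul, Real.norm_of_nonneg hs, Real.norm_of_nonneg ht]
    have h2 := mul_le_mul_of_nonneg_left h1 (norm_nonneg (m i))
    have h3 : ‖c i‖ = s * ‖c i‖ + t * ‖c i‖ := by rw [← add_mul, hst, one_mul]
    nlinarith
  change S0 m c (s • p.1 + t • q.1) < (s • p.2 + t • q.2).re
  have h4 : (s • p.2 + t • q.2).re = s * p.2.re + t * q.2.re := by simp
  rw [h4]
  refine hle.trans_lt ?_
  rcases hs.eq_or_lt with rfl | hs'
  · have : t = 1 := by linarith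
    subst this; linarith
  · have := mul_lt_mul_of_pos_left hp' hs'
    have := mul_le_mul_of_nonneg_left hq'.le ht
    linarith

theorem Om_open : IsOpen (Om m c) :=
  isOpen_lt ((S0_cont m c).comp continuous_fst) (Complex.continuous_re.comp continuous_snd)

theorem FF_open : IsOpen (FF m c) := by
  have : FF m c = ⋂ i, {p | p.2 ≠ m i * p.1 + c i} := by ext; simp [FF]
  rw [this]
  refine isOpen_iInter_of_finite fun i => ?_
  exact isOpen_ne_fun (by fun_prop) (by fun_prop)

/-- curves in a fibre -/
def Fib (x : ℂ) (δ : ℝ → ℂ) : Prop :=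
  ContinuousOn δ (Icc 0 1) ∧ ∀ t ∈ Icc (0:ℝ) 1, (x, δ t) ∈ FF m c

def vert (x : ℂ) (δ : ℝ → ℂ) : ℝ → ℂ × ℂ := fun t => (x, δ t)

variable {m c}
theorem Fib.curve {x : ℂ} {δ : ℝ → ℂ} (h : Fib m c x δ) : Curve (FF m c) (vert x δ) :=
  ⟨continuousOn_const.prodMk h.1, h.2⟩

theorem fib_exists {x y y' : ℂ} (h : (x, y) ∈ FF m c) (h' : (x, y') ∈ FF m c) :
    ∃ δ, Fib m c x δ ∧ δ 0 = y ∧ δ 1 = y' := by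
  have hfin : (range fun i => m i * x + c i).Finite := finite_range _
  have hpc : IsPathConnected (range fun i => m i * x + c i)ᶜ :=
    hfin.countable.isPathConnected_compl_of_one_lt_rank (by simp)
  have mem : ∀ z, (x, z) ∈ FF m c ↔ z ∈ (range fun i => m i * x + c i)ᶜ := by
    intro z; simp [FF, eq_comm]
  obtain ⟨γ, hγ⟩ := hpc.joinedIn y ((mem y).1 h) y' ((mem y').1 h')
  refine ⟨fun t => γ.extend t, ⟨by fun_prop, ?_⟩, by simp, by simp⟩
  intro t ht
  rw [mem]
  change γ.extend t ∈ _
  rw [Path.extend_apply _ ht]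
  exact hγ _

theorem FF_pc : IsPathConnected (FF m c) := by
  have hO : ∀ x : ℂ, (x, ((S0 m c x + 1 : ℝ) : ℂ)) ∈ Om m c := fun x => by simp [Om]
  refine ⟨(0, ((S0 m c 0 + 1 : ℝ) : ℂ)), Om_sub m c (hO 0), ?_⟩
  intro p hp
  obtain ⟨δ, hδ, h0, h1⟩ := fib_exists (x := p.1) (Om_sub m c (hO p.1)) hp
  have j1 : JoinedIn (FF m c) (0, ((S0 m c 0 + 1 : ℝ) : ℂ)) (p.1, ((S0 m c p.1 + 1 : ℝ) : ℂ)) :=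
    (((Om_convex m c).isPathConnected ⟨_, hO 0⟩).joinedIn _ (hO 0) _ (hO p.1)).mono (Om_sub m c)
  have j2 : JoinedIn (FF m c) (p.1, ((S0 m c p.1 + 1 : ℝ) : ℂ)) p := by
    have hc := hδ.curve
    refine JoinedIn.ofLine (f := vert p.1 δ) hc.1 (by simp [vert, h0]) (by simp [vert, h1]) ?_
    rintro _ ⟨t, ht, rfl⟩
    exact hc.2 ht
  exact j1.trans j2

instance : PathConnectedSpace (FF m c) := isPathConnected_iff_pathConnectedSpace.1 FF_pc

variable (b : FF m c)

theorem fib_cat {x : ℂ} {α β : ℝ → ℂ} (hα : Fib m c x α) (hβ : Fib m c x β) (h : α 1 = β 0) :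
    ∃ γ, Fib m c x γ ∧ γ 0 = α 0 ∧ γ 1 = β 1 ∧
      cls b (vert x γ) = cls b (vert x α) * cls b (vert x β) := by
  obtain ⟨γ, h1, h2, h3, h4, h5, h6⟩ := exists_cat hα.1 hβ.1 h
  have hγ : Fib m c x γ := by
    refine ⟨h1, fun t ht => ?_⟩
    rcases h6 t ht with ⟨s, hs, e⟩ | ⟨s, hs, e⟩
    · rw [e]; exact hα.2 s hs
    · rw [e]; exact hβ.2 s hs
  refine ⟨γ, hγ, h4, h5, ?_⟩
  have := cls_sub b hγ.curve zero_mem_I (s := 1/2) (by constructor <;> norm_num) one_mem_I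
  rw [comp_seg01] at this
  rw [← this]
  congr 1
  · exact cls_congr b fun t ht => by simp only [vert, Function.comp]; rw [h2 t ht]
  · exact cls_congr b fun t ht => by simp only [vert, Function.comp]; rw [h3 t ht]

theorem fib_inv {x : ℂ} {α : ℝ → ℂ} (hα : Fib m c x α) :
    ∃ γ, Fib m c x γ ∧ γ 0 = α 1 ∧ γ 1 = α 0 ∧
      cls b (vert x γ) = (cls b (vert x α))⁻¹ := by
  refine ⟨α ∘ seg 1 0, ⟨?_, ?_⟩, by simp, by simp, ?_⟩
  · exact hα.1.comp (seg_cont _ _).continuousOn fun t ht =>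
      seg_mem (convex_Icc (0:ℝ) 1) one_mem_I zero_mem_I ht
  · intro t ht
    exact hα.2 _ (seg_mem (convex_Icc (0:ℝ) 1) one_mem_I zero_mem_I ht)
  · have := cls_seg_inv b (convex_Icc (0:ℝ) 1) hα.curve.1 hα.curve.2 zero_mem_I one_mem_I
    rw [comp_seg01] at this
    rw [← this]; rfl

/-- tube -/
theorem fib_tube {x : ℂ} {δ : ℝ → ℂ} (h : Fib m c x δ) : ∀ᶠ x' in 𝓝 x, Fib m c x' δ := by
  have hK : IsCompact (δ '' Icc 0 1) := isCompact_Icc.image_of_continuousOn h.1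
  have : ∀ᶠ x' in 𝓝 x, ∀ y ∈ δ '' Icc 0 1, (x', y) ∈ FF m c := by
    refine hK.eventually_forall_of_forall_eventually ?_
    rintro _ ⟨t, ht, rfl⟩
    exact (FF_open m c).eventually_mem (h.2 t ht)
  filter_upwards [this] with x' hx'
  exact ⟨h.1, fun t ht => hx' _ ⟨t, ht, rfl⟩⟩

theorem om_near {x y : ℂ} (h : (x, y) ∈ Om m c) : ∀ᶠ x' in 𝓝 x, (x', y) ∈ Om m c :=
  (Continuous.prodMk_left y).continuousAt.eventually ((Om_open m c).eventually_mem h)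

/-- class of the segment in Om -/
noncomputable def jj (p : ℂ × ℂ) : FundamentalGroup (FF m c) b := cls b (seg (b : ℂ × ℂ) p)

theorem jj_seg (hb : (b : ℂ × ℂ) ∈ Om m c) {p q : ℂ × ℂ} (hp : p ∈ Om m c) (hq : q ∈ Om m c) :
    jj b p * cls b (seg p q) = jj b q :=
  cls_tri b (Om_convex m c) continuousOn_id (Om_sub m c) hb hp hq

theorem seg_prod (x x' y y' : ℂ) : seg (x, y) (x', y') = fun t => (seg x x' t, seg y y' t) := by
  ext t <;> simp [seg_def]

theorem sweep {x x' : ℂ} {δ : ℝ → ℂ} {D : Set ℂ} (hD : Convex ℝ D) (hx : x ∈ D) (hx' : x' ∈ D)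
    (h : ∀ z ∈ D, Fib m c z δ) :
    cls b (seg (x, δ 0) (x', δ 0)) * cls b (vert x' δ) =
      cls b (vert x δ) * cls b (seg (x, δ 1) (x', δ 1)) := by
  have := cls_square b (F := FF m c) (H := fun p => (seg x x' p.1, δ p.2)) ?_ ?_
  · rw [seg_prod, seg_prod]
    simp only [seg_zero, seg_one] at this
    simp only [seg_self]
    exact this
  · refine ContinuousOn.prodMk ((seg_cont x x').comp continuous_fst).continuousOn ?_
    exact (h x hx).1.comp continuousOn_snd fun p hp => hp.2
  · rintro p ⟨h1, h2⟩
    exact (h _ (seg_mem hD hx hx' h1)).2 _ h2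

variable (S : Subgroup (FundamentalGroup (FF m c) b))

def KK (x : ℂ) : Prop := ∀ δ, Fib m c x δ → (x, δ 0) ∈ Om m c → (x, δ 1) ∈ Om m c →
  jj b (x, δ 0) * cls b (vert x δ) * (jj b (x, δ 1))⁻¹ ∈ S

theorem kk_move (hb : (b : ℂ × ℂ) ∈ Om m c) {x x' : ℂ} {δ : ℝ → ℂ} {D : Set ℂ}
    (hD : Convex ℝ D) (hx : x ∈ D) (hx' : x' ∈ D) (h : ∀ z ∈ D, Fib m c z δ)
    (h0 : ∀ z ∈ D, (z, δ 0) ∈ Om m c) (h1 : ∀ z ∈ D, (z, δ 1) ∈ Om m c) :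
    jj b (x, δ 0) * cls b (vert x δ) * (jj b (x, δ 1))⁻¹ =
    jj b (x', δ 0) * cls b (vert x' δ) * (jj b (x', δ 1))⁻¹ := by
  have := sweep b hD hx hx' h
  rw [← jj_seg b hb (h0 x hx) (h0 x' hx'), ← jj_seg b hb (h1 x hx) (h1 x' hx'),
    mul_assoc (jj b (x, δ 0)) (cls b (seg (x, δ 0) (x', δ 0))), this]
  group

/-- `KK` follows from loops at one point kept away from the points. -/
theorem kk_of_loops (hb : (b : ℂ × ℂ) ∈ Om m c) {x Y : ℂ} (hY : (x, Y) ∈ Om m c)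
    {ρ : ℝ} (hρ : 0 < ρ)
    (hsep : ∀ i j, i ≠ j → 2 * ρ < ‖(m i * x + c i) - (m j * x + c j)‖)
    (hYρ : ∀ i, ρ ≤ ‖Y - (m i * x + c i)‖)
    (h : ∀ δ, Fib m c x δ → δ 0 = Y → δ 1 = Y →
      (∀ t ∈ Icc (0:ℝ) 1, ∀ i, ρ ≤ ‖δ t - (m i * x + c i)‖) →
      jj b (x, Y) * cls b (vert x δ) * (jj b (x, Y))⁻¹ ∈ S) : KK b S x := by
  intro δ hδ h0 h1
  have hseg : ∀ {y y' : ℂ}, (x, y) ∈ Om m c → (x, y') ∈ Om m c → Fib m c x (seg y y') ∧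
      vert x (seg y y') = seg (x, y) (x, y') := by
    intro y y' hy hy'
    have e : vert x (seg y y') = seg (x, y) (x, y') := by
      ext t <;> simp [seg_def, vert]
    refine ⟨⟨(seg_cont _ _).continuousOn, fun t ht => ?_⟩, e⟩
    have := congrFun e t
    simp only [vert] at this
    rw [this]
    exact Om_sub m c (seg_mem (Om_convex m c) hy hy' ht)
  obtain ⟨a1, a2⟩ := hseg hY h0
  obtain ⟨b1, b2⟩ := hseg h1 hY
  obtain ⟨γ1, g1, g2, g3, g4⟩ := fib_cat b a1 hδ (by simp)
  obtain ⟨γ, k1, k2, k3, k4⟩ := fib_cat b g1 b1 (by simp [g3])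
  have hγ0 : γ 0 = Y := by rw [k2, g2]; simp
  have hγ1 : γ 1 = Y := by rw [k3]; simp
  obtain ⟨P, p1, p2, p3, p4, p5⟩ := push (fun i => m i * x + c i) hρ hsep
  have hP : cls b (vert x γ) = cls b (vert x fun t => P 1 (γ t)) := by
    have := cls_square b (F := FF m c) (H := fun q => (x, P q.2 (γ q.1))) ?_ ?_
    · simp only [p3, hγ0, hγ1, p5 _ Y hYρ, cls_const, mul_one, one_mul] at this
      exact this
    · refine continuousOn_const.prodMk ?_
      refine p1.comp (f := fun q : ℝ × ℝ => (q.2, γ q.1)) ?_ ?_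
      · exact continuousOn_snd.prodMk (k1.1.comp continuousOn_fst fun q hq => hq.1)
      · intro q hq; exact k1.2 _ hq.1
    · rintro q ⟨hq1, hq2⟩
      exact p2 _ hq2 _ (k1.2 _ hq1)
  have hPf : Fib m c x fun t => P 1 (γ t) := by
    refine ⟨?_, fun t ht => p2 1 one_mem_I _ (k1.2 t ht)⟩
    exact p1.comp (f := fun t : ℝ => ((1:ℝ), γ t)) (continuousOn_const.prodMk k1.1)
      (fun t ht => k1.2 t ht)
  have := h _ hPf (by simp only [hγ0, p5 _ Y hYρ]) (by simp only [hγ1, p5 _ Y hYρ])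
    (fun t ht i => p4 _ (k1.2 t ht) i)
  rw [← hP, k4, g4, a2, b2] at this
  convert this using 1
  rw [← jj_seg b hb hY h0, ← jj_seg b hb h1 hY]
  group

end setup
end SL

namespace SL
open Set Topology Filter
set_option linter.unusedSectionVars false

section setup
variable {ι : Type*} [Fintype ι] {m c : ι → ℂ} (b : FF m c)
  (S : Subgroup (FundamentalGroup (FF m c) b))

theorem kk_local (hb : (b : ℂ × ℂ) ∈ Om m c) {x0 : ℂ}
    (hx0 : ∀ i j, i ≠ j → m i * x0 + c i ≠ m j * x0 + c j) :
    ∀ᶠ x in 𝓝 x0, (KK b S x0 → KK b S x) ∧ (KK b S x → KK b S x0) := by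
  obtain ⟨ρ, hρ, hsep⟩ : ∃ ρ > (0:ℝ), ∀ i j, i ≠ j →
      2 * ρ < ‖(m i * x0 + c i) - (m j * x0 + c j)‖ := by
    have : ∀ᶠ ρ in 𝓝[>] (0:ℝ), ∀ i j, i ≠ j →
        2 * ρ < ‖(m i * x0 + c i) - (m j * x0 + c j)‖ := by
      refine eventually_all.2 fun i => eventually_all.2 fun j => ?_
      by_cases hij : i = j
      · simp [hij]
      · have hpos : 0 < ‖(m i * x0 + c i) - (m j * x0 + c j)‖ :=
          norm_pos_iff.2 (sub_ne_zero.2 (hx0 i j hij))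
        have : ∀ᶠ ρ in 𝓝 (0:ℝ), 2 * ρ < ‖(m i * x0 + c i) - (m j * x0 + c j)‖ := by
          have hc : ContinuousAt (fun ρ : ℝ => 2 * ρ) 0 := by fun_prop
          exact hc.eventually_lt continuousAt_const (by simpa using hpos)
        filter_upwards [nhdsWithin_le_nhds this] with ρ h _ using h
    obtain ⟨ρ, h1, h2⟩ := (this.and self_mem_nhdsWithin).exists
    exact ⟨ρ, h2, h1⟩
  let Y : ℂ := ((S0 m c x0 + ρ + 1 : ℝ) : ℂ)
  have hY : (x0, Y) ∈ Om m c := by simp [Om, Y]; linarith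
  have hYρ : ∀ i, ρ < ‖Y - (m i * x0 + c i)‖ := by
    intro i
    have h1 := S0_le m c x0 i
    have h2 := norm_sub_norm_le Y (m i * x0 + c i)
    have h3 : Y.re ≤ ‖Y‖ := Complex.re_le_norm _
    have h4 : Y.re = S0 m c x0 + ρ + 1 := by simp [Y]
    linarith
  have e1 : ∀ᶠ x in 𝓝 x0, ∀ i j, i ≠ j →
      2 * ρ < ‖(m i * x + c i) - (m j * x + c j)‖ := by
    refine eventually_all.2 fun i => eventually_all.2 fun j => ?_
    by_cases hij : i = j
    · simp [hij]
    · have hc : ContinuousAt (fun x => ‖(m i * x + c i) - (m j * x + c j)‖) x0 := by fun_prop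
      filter_upwards [continuousAt_const.eventually_lt hc (hsep i j hij)] with x h _ using h
  have e2 := om_near hY
  have e3 : ∀ᶠ x in 𝓝 x0, ∀ i, ρ < ‖Y - (m i * x + c i)‖ := by
    refine eventually_all.2 fun i => ?_
    have hc : ContinuousAt (fun x => ‖Y - (m i * x + c i)‖) x0 := by fun_prop
    exact continuousAt_const.eventually_lt hc (hYρ i)
  have e4 : ∀ᶠ x in 𝓝 x0, ∀ i, ‖m i * x - m i * x0‖ < ρ / 2 := by
    refine eventually_all.2 fun i => ?_
    have hc : ContinuousAt (fun x => ‖m i * x - m i * x0‖) x0 := by fun_prop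
    exact hc.eventually_lt continuousAt_const (by simpa using hρ)
  obtain ⟨r, hr, hball⟩ := Metric.eventually_nhds_iff_ball.1 (e1.and (e2.and (e3.and e4)))
  have key : ∀ x ∈ Metric.ball x0 r, ∀ x' ∈ Metric.ball x0 r, KK b S x → KK b S x' := by
    intro x hx x' hx' hK
    obtain ⟨f1, f2, f3, f4⟩ := hball x' hx'
    refine kk_of_loops b S hb f2 hρ f1 (fun i => (f3 i).le) ?_
    intro δ hδ h0 h1 hfar
    have := kk_move b hb (x := x') (x' := x) (δ := δ) (convex_ball x0 r) hx' hx ?_ ?_ ?_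
    · rw [h0, h1] at this
      rw [this]
      have h2 := hK δ
      rw [h0, h1] at h2
      refine h2 ⟨hδ.1, fun t ht i => ?_⟩ (hball x hx).2.1 (hball x hx).2.1
      have g1 := hfar t ht i
      have g2 := (hball x hx).2.2.2 i
      have g3 := f4 i
      intro e
      simp only at e
      rw [e] at g1
      have : m i * x + c i - (m i * x' + c i) = (m i * x - m i * x0) - (m i * x' - m i * x0) := by
        ring
      rw [this] at g1
      have := norm_sub_le (m i * x - m i * x0) (m i * x' - m i * x0)
      linarith
    · intro z hz
      refine ⟨hδ.1, fun t ht i => ?_⟩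
      have g1 := hfar t ht i
      have g2 := (hball z hz).2.2.2 i
      have g3 := f4 i
      intro e
      simp only at e
      rw [e] at g1
      have : m i * z + c i - (m i * x' + c i) = (m i * z - m i * x0) - (m i * x' - m i * x0) := by
        ring
      rw [this] at g1
      have := norm_sub_le (m i * z - m i * x0) (m i * x' - m i * x0)
      linarith
    · intro z hz; rw [h0]; exact (hball z hz).2.1
    · intro z hz; rw [h1]; exact (hball z hz).2.1
  filter_upwards [Metric.ball_mem_nhds x0 hr] with x hx
  exact ⟨key x0 (Metric.mem_ball_self hr) x hx, key x hx x0 (Metric.mem_ball_self hr)⟩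

theorem kk_all (hm : Function.Injective m) (hb : (b : ℂ × ℂ) ∈ Om m c) {x1 : ℂ}
    (hx1 : ∀ i j, i ≠ j → m i * x1 + c i ≠ m j * x1 + c j) (h1 : KK b S x1) :
    ∀ x, KK b S x := by
  let B : Set ℂ := {x | ∃ i j, i ≠ j ∧ m i * x + c i = m j * x + c j}
  have hB : B.Finite := by
    refine (finite_range fun q : ι × ι => (c q.2 - c q.1) / (m q.1 - m q.2)).subset ?_
    rintro x ⟨i, j, hij, h⟩
    refine ⟨(i, j), ?_⟩
    have : m i - m j ≠ 0 := sub_ne_zero.2 (hm.ne hij)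
    simp only
    rw [div_eq_iff this]
    linear_combination -h
  have hBc : ∀ x, x ∈ Bᶜ ↔ ∀ i j, i ≠ j → m i * x + c i ≠ m j * x + c j := by
    intro x; simp [B]
  have hconn : IsPreconnected Bᶜ :=
    (hB.countable.isConnected_compl_of_one_lt_rank (by simp)).isPreconnected
  have hgen : ∀ x ∈ Bᶜ, KK b S x := by
    intro x hx
    refine hconn.induction₂' (fun x y => (KK b S x → KK b S y)) ?_ ?_
      ((hBc x1).2 hx1) hx h1
    · intro x hx
      exact nhdsWithin_le_nhds (kk_local b S hb ((hBc x).1 hx))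
    · intro x y z _ _ _ h h' hx; exact h' (h hx)
  intro x δ hδ h0 h1
  obtain ⟨r, hr, hball⟩ := Metric.eventually_nhds_iff_ball.1
    ((fib_tube hδ).and ((om_near h0).and (om_near h1)))
  have hdense : Dense Bᶜ := hB.countable.dense_compl ℝ
  obtain ⟨x', hx', hx'B⟩ := hdense.exists_mem_open Metric.isOpen_ball
    ⟨x, Metric.mem_ball_self (x := x) hr⟩
  rw [kk_move b hb (convex_ball x r) (Metric.mem_ball_self hr) hx'B
    (fun z hz => (hball z hz).1) (fun z hz => (hball z hz).2.1) (fun z hz => (hball z hz).2.2)]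
  exact hgen x' hx' δ (hball x' hx'B).1 (hball x' hx'B).2.1 (hball x' hx'B).2.2

theorem all_mem (hb : (b : ℂ × ℂ) ∈ Om m c) (hK : ∀ x, KK b S x) (g) : g ∈ S := by
  let Yt : ℂ → ℂ := fun x => ((S0 m c x + 1 : ℝ) : ℂ)
  have hO : ∀ x : ℂ, (x, Yt x) ∈ Om m c := fun x => by simp [Om, Yt]
  have hex : ∀ p : ℂ × ℂ, ∃ δ, p ∈ FF m c → Fib m c p.1 δ ∧ δ 0 = p.2 ∧ δ 1 = Yt p.1 := by
    intro p
    by_cases hp : p ∈ FF m c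
    · obtain ⟨δ, hδ⟩ := fib_exists (x := p.1) (y := p.2) hp (Om_sub m c (hO p.1))
      exact ⟨δ, fun _ => hδ⟩
    · exact ⟨fun _ => 0, fun h => absurd h hp⟩
  choose δ hδ using hex
  let k : ℂ × ℂ → FundamentalGroup (FF m c) b :=
    fun p => jj b (p.1, Yt p.1) * (cls b (vert p.1 (δ p)))⁻¹
  have hloc : ∀ p ∈ FF m c, ∃ U ∈ 𝓝 p, ∀ ω : ℝ → ℂ × ℂ, Curve (FF m c) ω →
      MapsTo ω (Icc 0 1) U → k (ω 0) * cls b ω * (k (ω 1))⁻¹ ∈ S := by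
    intro p0 hp0
    obtain ⟨d1, d2, d3⟩ := hδ p0 hp0
    have ev1 : ∀ᶠ x in 𝓝 p0.1, Fib m c x (δ p0) ∧ (x, Yt p0.1) ∈ Om m c :=
      (fib_tube d1).and (om_near (hO p0.1))
    obtain ⟨r1, hr1, hb1⟩ := Metric.eventually_nhds_iff_ball.1 ev1
    obtain ⟨r2, hr2, hb2⟩ := Metric.isOpen_iff.1 (FF_open m c) p0 hp0
    let r := min r1 r2
    have hr : 0 < r := lt_min hr1 hr2
    have hU1 : Metric.ball p0 r ⊆ FF m c :=
      (Metric.ball_subset_ball (min_le_right _ _)).trans hb2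
    have hU2 : ∀ z ∈ Metric.ball p0.1 r, Fib m c z (δ p0) ∧ (z, Yt p0.1) ∈ Om m c :=
      fun z hz => hb1 z (Metric.ball_subset_ball (min_le_left _ _) hz)
    have hmem : ∀ p : ℂ × ℂ, p ∈ Metric.ball p0 r ↔
        p.1 ∈ Metric.ball p0.1 r ∧ p.2 ∈ Metric.ball p0.2 r := by
      intro p; simp [Metric.mem_ball, Prod.dist_eq]
    have hconv : Convex ℝ (Metric.ball p0 r) := convex_ball p0 r
    have brk : ∀ p ∈ Metric.ball p0 r, k p * cls b (seg p (p.1, p0.2)) *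
        cls b (vert p.1 (δ p0)) * (jj b (p.1, Yt p0.1))⁻¹ ∈ S := by
      intro p hp
      have hp2 : ((p.1, p0.2) : ℂ × ℂ) ∈ Metric.ball p0 r :=
        (hmem _).2 ⟨((hmem p).1 hp).1, Metric.mem_ball_self hr⟩
      have e : vert p.1 (seg p.2 p0.2) = seg p (p.1, p0.2) := by
        ext t <;> simp [seg_def, vert]
      have hs : Fib m c p.1 (seg p.2 p0.2) := by
        refine ⟨(seg_cont _ _).continuousOn, fun t ht => ?_⟩
        have := congrFun e t
        simp only [vert] at this
        rw [this]
        exact hU1 (seg_mem hconv hp hp2 ht)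
      obtain ⟨p1, p2, p3⟩ := hδ p (hU1 hp)
      obtain ⟨α, a1, a2, a3, a4⟩ := fib_inv b p1
      obtain ⟨β, b1, b2, b3, b4⟩ := fib_cat b a1 hs (by rw [a3, p2]; simp)
      obtain ⟨γ, g1, g2, g3, g4⟩ := fib_cat b b1 (hU2 p.1 ((hmem p).1 hp).1).1
        (by rw [b3, d2]; simp)
      have h0 : γ 0 = Yt p.1 := by rw [g2, b2, a2, p3]
      have h1 : γ 1 = Yt p0.1 := by rw [g3, d3]
      have := hK p.1 γ g1 (by rw [h0]; exact hO _) (by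
        rw [h1]; exact (hU2 p.1 ((hmem p).1 hp).1).2)
      rw [h0, h1, g4, b4, a4, e] at this
      convert this using 1
      simp only [k]
      group
    refine ⟨Metric.ball p0 r, Metric.ball_mem_nhds p0 hr, fun ω hω hωU => ?_⟩
    rw [cls_convex b hconv hU1 (ω := ω) ⟨hω.1, hωU⟩]
    have hp := hωU zero_mem_I
    have hq := hωU one_mem_I
    generalize ω 0 = p at hp
    generalize ω 1 = q at hq
    have hp2 : ((p.1, p0.2) : ℂ × ℂ) ∈ Metric.ball p0 r :=
      (hmem _).2 ⟨((hmem p).1 hp).1, Metric.mem_ball_self hr⟩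
    have hq2 : ((q.1, p0.2) : ℂ × ℂ) ∈ Metric.ball p0 r :=
      (hmem _).2 ⟨((hmem q).1 hq).1, Metric.mem_ball_self hr⟩
    have t1 := cls_tri b hconv (f := id) continuousOn_id hU1 hp hp2 hq2
    have t2 := cls_tri b hconv (f := id) continuousOn_id hU1 hp hq2 hq
    have t3 := cls_seg_inv b hconv (f := id) continuousOn_id hU1 hq hq2
    simp only [Function.id_comp] at t1 t2 t3
    have sw := sweep b (convex_ball p0.1 r) ((hmem p).1 hp).1 ((hmem q).1 hq).1
      (fun z hz => (hU2 z hz).1)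
    rw [d2, d3] at sw
    have jjs := jj_seg b hb (hU2 p.1 ((hmem p).1 hp).1).2 (hU2 q.1 ((hmem q).1 hq).1).2
    have := S.mul_mem (brk p hp) (S.inv_mem (brk q hq))
    convert this using 1
    rw [← t2, ← t1, t3, ← jjs]
    have sw' : cls b (seg (p.1, p0.2) (q.1, p0.2)) = cls b (vert p.1 (δ p0)) *
        cls b (seg (p.1, Yt p0.1) (q.1, Yt p0.1)) * (cls b (vert q.1 (δ p0)))⁻¹ :=
      eq_mul_inv_of_mul_eq sw
    rw [sw']
    group
  obtain ⟨ω, hω, w0, w1, rfl⟩ := cls_surj b g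
  have h1 := cls_local b S k hloc hω
  rw [w0, w1] at h1
  have h2 : k b ∈ S := by
    obtain ⟨d1, d2, d3⟩ := hδ b b.2
    have := hK _ _ d1 (by rw [d2]; exact hb) (by rw [d3]; exact hO _)
    rw [d2, d3] at this
    have e : jj b (((b : ℂ × ℂ).1, (b : ℂ × ℂ).2)) = 1 := by
      have : seg (b : ℂ × ℂ) b = fun _ => (b : ℂ × ℂ) := by ext1 t; simp
      simp only [jj, this, cls_const]
    rw [e, one_mul] at this
    have := S.inv_mem this
    rwa [mul_inv_rev, inv_inv] at this
  have := S.mul_mem (S.mul_mem (S.inv_mem h2) h1) h2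
  convert this using 1
  group

/-- rotation loop -/
noncomputable def rot (p : ℂ × ℂ) (k : ℤ) : ℝ → ℂ × ℂ :=
  fun t => Complex.exp (2 * Real.pi * Complex.I * k * t) • p

theorem rot_one (p : ℂ × ℂ) (k : ℤ) : rot p k 1 = p := by
  have : Complex.exp (2 * Real.pi * Complex.I * k * (1:ℝ)) = 1 := by
    rw [Complex.exp_eq_one_iff]; exact ⟨k, by push_cast; ring⟩
  simp only [rot, this, one_smul]

theorem rot_zero (p : ℂ × ℂ) (k : ℤ) : rot p k 0 = p := by simp [rot]

theorem rot_mem {p : ℂ × ℂ} (hp : ∀ i, ‖c i‖ < ‖p.2 - m i * p.1‖) {e : ℂ} (he : 1 ≤ ‖e‖) :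
    e • p ∈ FF m c := by
  intro i h
  simp only [Prod.smul_fst, Prod.smul_snd, smul_eq_mul] at h
  have h1 : e * (p.2 - m i * p.1) = c i := by linear_combination h
  have h2 := hp i
  rw [← h1, norm_mul] at h2
  nlinarith [norm_nonneg (p.2 - m i * p.1)]

theorem norm_rot (k : ℤ) (t : ℝ) : ‖Complex.exp (2 * Real.pi * Complex.I * k * t)‖ = 1 := by
  rw [Complex.norm_exp]; simp

/-- sweeping rotation loops along a curve in the region where rotation is allowed -/
theorem rot_sweep (k : ℤ) {ω : ℝ → ℂ × ℂ} (hω : ContinuousOn ω (Icc 0 1))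
    (h : ∀ t ∈ Icc (0:ℝ) 1, ∀ i, ‖c i‖ < ‖(ω t).2 - m i * (ω t).1‖) :
    cls b ω * cls b (rot (ω 1) k) = cls b (rot (ω 0) k) * cls b ω := by
  have := cls_square b (F := FF m c)
    (H := fun q => Complex.exp (2 * Real.pi * Complex.I * k * q.2) • ω q.1) ?_ ?_
  · have h0 : (fun t => Complex.exp (2 * Real.pi * Complex.I * k * (0:ℝ)) • ω t) = ω := by
      ext t <;> simp
    have h1 : (fun t => Complex.exp (2 * Real.pi * Complex.I * k * (1:ℝ)) • ω t) = ω := by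
      ext1 t; exact rot_one (ω t) k
    simp only [h0, h1] at this
    exact this
  · have hc1 : ContinuousOn (fun q : ℝ × ℝ => Complex.exp (2 * Real.pi * Complex.I * k * q.2))
        (Icc 0 1 ×ˢ Icc 0 1) := by fun_prop
    have hc2 : ContinuousOn (fun q : ℝ × ℝ => ω q.1) (Icc 0 1 ×ˢ Icc 0 1) :=
      hω.comp continuousOn_fst fun q hq => hq.1
    exact hc1.smul hc2
  · rintro q ⟨hq, _⟩
    exact rot_mem (h _ hq) (norm_rot k q.2).ge

theorem rot_central (hm : Function.Injective m) (hb : (b : ℂ × ℂ) ∈ Om m c) {ρ : ℝ} (hρ : 0 < ρ)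
    (h1 : ∀ i, 2 * ‖c i‖ < ρ)
    (h2 : ∀ i, ρ ≤ ‖(b : ℂ × ℂ).2 - (m i * (b : ℂ × ℂ).1 + c i)‖)
    (h3 : ∀ i j, i ≠ j → 2 * ρ <
      ‖(m i * (b : ℂ × ℂ).1 + c i) - (m j * (b : ℂ × ℂ).1 + c j)‖) (k : ℤ)
    (g : FundamentalGroup (FF m c) b) :
    g * cls b (rot b k) = cls b (rot b k) * g := by
  let S := Subgroup.centralizer {cls b (rot b k)}
  have hS : ∀ g, g ∈ S ↔ cls b (rot b k) * g = g * cls b (rot b k) := by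
    intro g; simp [S, Subgroup.mem_centralizer_iff]
  have hK : KK b S (b : ℂ × ℂ).1 := by
    refine kk_of_loops b S hb (Y := (b : ℂ × ℂ).2) hb hρ h3 h2 ?_
    intro δ hδ d0 d1 hfar
    have e : jj b (((b : ℂ × ℂ).1, (b : ℂ × ℂ).2)) = 1 := by
      have : seg (b : ℂ × ℂ) b = fun _ => (b : ℂ × ℂ) := by ext1 t; simp
      simp only [jj, this, cls_const]
    rw [e, one_mul, inv_one, mul_one, hS]
    have := rot_sweep b k (ω := vert (b : ℂ × ℂ).1 δ) hδ.curve.1 ?_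
    · simp only [vert, d0, d1] at this
      exact this.symm
    · intro t ht i
      have g1 := hfar t ht i
      have g2 := h1 i
      have g3 := norm_sub_le (δ t - m i * (b : ℂ × ℂ).1) (c i)
      rw [sub_sub] at g3
      simp only [vert]
      linarith
  have := all_mem b S hb (kk_all b S hm hb (fun i j hij e => by
    have := h3 i j hij
    rw [e, sub_self, norm_zero] at this
    linarith) hK) g
  exact ((hS g).1 this).symm

end setup
end SL

namespace SL
open Set Topology Filter
set_option linter.unusedSectionVars false

theorem log_lift_gen {A : Type*} [TopologicalSpace A] [SimplyConnectedSpace A]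
    [LocallyPathConnectedSpace A] (u : A → ℂ) (hu : Continuous u) (h0 : ∀ a, u a ≠ 0) :
    ∃ l : A → ℂ, Continuous l ∧ ∀ a, Complex.exp (l a) = u a := by
  let f : C(A, {z : ℂ // z ≠ 0}) := ⟨fun a => ⟨u a, h0 a⟩, by fun_prop⟩
  obtain ⟨a₀⟩ : Nonempty A := inferInstance
  obtain ⟨g, ⟨_, hg⟩, _⟩ := Complex.isCoveringMap_exp.existsUnique_continuousMap_lifts f a₀
    (Complex.log (u a₀)) (Subtype.ext (Complex.exp_log (h0 a₀)))
  exact ⟨g, g.continuous, fun a => congrArg Subtype.val (congrFun hg a)⟩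

theorem log_lift {u : ℝ → ℂ} (hu : ContinuousOn u (Icc 0 1)) (h0 : ∀ t ∈ Icc (0:ℝ) 1, u t ≠ 0) :
    ∃ l : ℝ → ℂ, Continuous l ∧ ∀ t ∈ Icc (0:ℝ) 1, Complex.exp (l t) = u t := by
  obtain ⟨l, hl, h⟩ := log_lift_gen (A := ℝ) (fun t => u (projIcc 0 1 zero_le_one t))
    ((continuousOn_iff_continuous_domRestrict.1 hu).comp (continuous_projIcc (h := zero_le_one)))
    (fun t => h0 _ (Subtype.property _))
  refine ⟨l, hl, fun t ht => ?_⟩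
  rw [h, projIcc_of_mem zero_le_one ht]

theorem exp_one_const {α : Type*} [TopologicalSpace α] {s : Set α} (hs : IsPreconnected s)
    {d : α → ℂ} (hd : ContinuousOn d s) (h : ∀ x ∈ s, Complex.exp (d x) = 1) {x y : α}
    (hx : x ∈ s) (hy : y ∈ s) : d x = d y := by
  have hc : {z : ℂ | Complex.exp z = 1}.Countable := by
    refine (countable_range fun n : ℤ => (n : ℂ) * (2 * Real.pi * Complex.I)).mono ?_
    intro z hz
    obtain ⟨n, hn⟩ := Complex.exp_eq_one_iff.1 hz
    exact ⟨n, hn.symm⟩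
  refine hc.isTotallyDisconnected (d '' s) ?_ (hs.image d hd) ⟨x, hx, rfl⟩ ⟨y, hy, rfl⟩
  rintro _ ⟨z, hz, rfl⟩
  exact h z hz

theorem lift_unique {l l' : ℝ → ℂ} (hl : ContinuousOn l (Icc 0 1)) (hl' : ContinuousOn l' (Icc 0 1))
    (h : ∀ t ∈ Icc (0:ℝ) 1, Complex.exp (l t) = Complex.exp (l' t)) :
    l 1 - l 0 = l' 1 - l' 0 := by
  have := exp_one_const isPreconnected_Icc (d := fun t => l t - l' t) (hl.sub hl')
    (fun t ht => by
      rw [Complex.exp_sub, h t ht, div_self (Complex.exp_ne_zero _)]) zero_mem_I one_mem_I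
  linear_combination -this

section cat
variable {E : Type*} [TopologicalSpace E] {F : Set E} [PathConnectedSpace F] (b : F)

theorem half_mem : (1/2 : ℝ) ∈ Icc (0:ℝ) 1 := by constructor <;> norm_num

theorem curve_cat {α β : ℝ → E} (hα : Curve F α) (hβ : Curve F β) (h : α 1 = β 0) :
    ∃ γ, Curve F γ ∧ γ 0 = α 0 ∧ γ 1 = β 1 ∧
      (∀ t ∈ Icc (0:ℝ) 1, γ (seg 0 (1/2) t) = α t) ∧
      (∀ t ∈ Icc (0:ℝ) 1, γ (seg (1/2) 1 t) = β t) := by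
  obtain ⟨γ, h1, h2, h3, h4, h5, h6⟩ := exists_cat hα.1 hβ.1 h
  refine ⟨γ, ⟨h1, fun t ht => ?_⟩, h4, h5, h2, h3⟩
  rcases h6 t ht with ⟨s, hs, e⟩ | ⟨s, hs, e⟩
  · rw [e]; exact hα.2 hs
  · rw [e]; exact hβ.2 hs

theorem cls_cat {E' : Type*} [TopologicalSpace E'] {X : Set E'} [PathConnectedSpace X] (q : X)
    (f : E → E') (hf : ContinuousOn f F) (hfX : MapsTo f F X) {α β γ : ℝ → E} (hγ : Curve F γ)
    (h1 : ∀ t ∈ Icc (0:ℝ) 1, γ (seg 0 (1/2) t) = α t)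
    (h2 : ∀ t ∈ Icc (0:ℝ) 1, γ (seg (1/2) 1 t) = β t) :
    cls q (f ∘ γ) = cls q (f ∘ α) * cls q (f ∘ β) := by
  have hc : Curve X (f ∘ γ) := ⟨hf.comp hγ.1 hγ.2, hfX.comp hγ.2⟩
  have := cls_sub q hc zero_mem_I half_mem one_mem_I
  rw [comp_seg01] at this
  rw [← this]
  congr 1
  · exact cls_congr q fun t ht => by simp only [Function.comp]; rw [h1 t ht]
  · exact cls_congr q fun t ht => by simp only [Function.comp]; rw [h2 t ht]

theorem curve_rev {α : ℝ → E} (hα : Curve F α) : Curve F (α ∘ seg 1 0) :=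
  curve_seg (convex_Icc 0 1) hα.1 hα.2 one_mem_I zero_mem_I

theorem cls_rev {α : ℝ → E} (hα : Curve F α) : cls b (α ∘ seg 1 0) = (cls b α)⁻¹ := by
  have := cls_seg_inv b (convex_Icc (0:ℝ) 1) hα.1 hα.2 zero_mem_I one_mem_I
  rwa [comp_seg01] at this

/-- winding number homomorphism -/
theorem winding (y : E → ℂ) (hy : ContinuousOn y F) (hy0 : ∀ p ∈ F, y p ≠ 0) :
    ∃ φ : FundamentalGroup F b →* Multiplicative ℤ, ∀ ω : ℝ → E, Curve F ω → ω 0 = b → ω 1 = b →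
      ∀ l : ℝ → ℂ, ContinuousOn l (Icc 0 1) →
      (∀ t ∈ Icc (0:ℝ) 1, Complex.exp (l t) = y (ω t)) →
      l 1 - l 0 = (Multiplicative.toAdd (φ (cls b ω)) : ℤ) * (2 * Real.pi * Complex.I) := by
  -- the total change of a lift
  have hlift : ∀ ω : ℝ → E, Curve F ω → ∃ l : ℝ → ℂ, Continuous l ∧
      ∀ t ∈ Icc (0:ℝ) 1, Complex.exp (l t) = y (ω t) := fun ω hω =>
    log_lift (hy.comp hω.1 hω.2) (fun t ht => hy0 _ (hω.2 ht))
  -- concatenation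
  have hcat : ∀ α β γ : ℝ → E, ∀ la lb lc : ℝ → ℂ, ContinuousOn la (Icc 0 1) →
      ContinuousOn lb (Icc 0 1) → ContinuousOn lc (Icc 0 1) →
      (∀ t ∈ Icc (0:ℝ) 1, Complex.exp (la t) = y (α t)) →
      (∀ t ∈ Icc (0:ℝ) 1, Complex.exp (lb t) = y (β t)) →
      (∀ t ∈ Icc (0:ℝ) 1, Complex.exp (lc t) = y (γ t)) →
      (∀ t ∈ Icc (0:ℝ) 1, γ (seg 0 (1/2) t) = α t) →
      (∀ t ∈ Icc (0:ℝ) 1, γ (seg (1/2) 1 t) = β t) →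
      lc 1 - lc 0 = (la 1 - la 0) + (lb 1 - lb 0) := by
    intro α β γ la lb lc ha hb hc ea eb ec h1 h2
    have m1 : ∀ t ∈ Icc (0:ℝ) 1, seg (0:ℝ) (1/2) t ∈ Icc (0:ℝ) 1 := fun t ht =>
      seg_mem (convex_Icc 0 1) zero_mem_I half_mem ht
    have m2 : ∀ t ∈ Icc (0:ℝ) 1, seg (1/2:ℝ) 1 t ∈ Icc (0:ℝ) 1 := fun t ht =>
      seg_mem (convex_Icc 0 1) half_mem one_mem_I ht
    have u1 := lift_unique (l := lc ∘ seg 0 (1/2)) (hc.comp (seg_cont _ _).continuousOn m1) ha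
      (fun t ht => by rw [ea t ht, ← h1 t ht]; exact ec _ (m1 t ht))
    have u2 := lift_unique (l := lc ∘ seg (1/2) 1) (hc.comp (seg_cont _ _).continuousOn m2) hb
      (fun t ht => by rw [eb t ht, ← h2 t ht]; exact ec _ (m2 t ht))
    simp only [Function.comp, seg_zero, seg_one] at u1 u2
    linear_combination u1 + u2
  -- null loops
  have hnull : ∀ ω : ℝ → E, Curve F ω → ω 0 = b → ω 1 = b → cls b ω = 1 → ∀ l : ℝ → ℂ,
      ContinuousOn l (Icc 0 1) → (∀ t ∈ Icc (0:ℝ) 1, Complex.exp (l t) = y (ω t)) →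
      l 1 - l 0 = 0 := by
    intro ω hω w0 w1 hc l hl el
    obtain ⟨H, Hc, HF, H0, H1, Ht, Hb⟩ := exists_null hω w0 w1 hc
    obtain ⟨h, hh, eh⟩ := log_lift_gen (A := ℝ × ℝ) (fun q => y (H q))
      (hy.comp_continuous Hc HF) (fun q => hy0 _ (HF q))
    have u := lift_unique hl (l' := fun t => h (t, 0)) (by fun_prop) (fun t ht => by
      rw [el t ht, eh]; simp only [← Hb ht])
    have side : ∀ f : ℝ → ℝ × ℝ, Continuous f → (∀ t, H (f t) = b) → h (f 0) = h (f 1) := by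
      intro f hf hfb
      have := exp_one_const (isPreconnected_univ (α := ℝ)) (d := fun t => h (f t) - h (f 0))
        (by fun_prop) (fun t _ => by
          simp only [Complex.exp_sub, eh, hfb]
          exact div_self (hy0 _ b.2)) (mem_univ 0) (mem_univ 1)
      linear_combination this
    have s1 := side (fun t => (0, t)) (by fun_prop) H0
    have s2 := side (fun t => (1, t)) (by fun_prop) H1
    have s3 := side (fun t => (t, 1)) (by fun_prop) Ht
    rw [u]
    linear_combination s2 - s1 - s3
  -- equal classes
  have heq : ∀ ω ω' : ℝ → E, Curve F ω → Curve F ω' → ω 0 = b → ω 1 = b → ω' 0 = b → ω' 1 = b →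
      cls b ω = cls b ω' → ∀ l l' : ℝ → ℂ, ContinuousOn l (Icc 0 1) → ContinuousOn l' (Icc 0 1) →
      (∀ t ∈ Icc (0:ℝ) 1, Complex.exp (l t) = y (ω t)) →
      (∀ t ∈ Icc (0:ℝ) 1, Complex.exp (l' t) = y (ω' t)) → l 1 - l 0 = l' 1 - l' 0 := by
    intro ω ω' hω hω' a0 a1 b0 b1 hc l l' hl hl' el el'
    obtain ⟨γ, g1, g2, g3, g4, g5⟩ := curve_cat hω (curve_rev hω') (by simp [a1, b1])
    have gc := cls_cat b id continuousOn_id (mapsTo_id F) g1 g4 g5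
    simp only [Function.id_comp] at gc
    rw [cls_rev b hω', hc, mul_inv_cancel] at gc
    obtain ⟨lc, hlc, elc⟩ := hlift γ g1
    have n := hnull γ g1 (by rw [g2, a0]) (by simp [g3, b0]) gc lc hlc.continuousOn elc
    have mm : ∀ t ∈ Icc (0:ℝ) 1, seg (1:ℝ) 0 t ∈ Icc (0:ℝ) 1 := fun t ht =>
      seg_mem (convex_Icc 0 1) one_mem_I zero_mem_I ht
    have := hcat ω (ω' ∘ seg 1 0) γ l (l' ∘ seg 1 0) lc hl
      (hl'.comp (seg_cont _ _).continuousOn mm) hlc.continuousOn el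
      (fun t ht => el' _ (mm t ht)) elc g4 g5
    simp only [Function.comp, seg_zero, seg_one] at this
    linear_combination n - this
  choose W hW W0 W1 hWg using cls_surj b
  choose l hl el using fun g => hlift (W g) (hW g)
  have hinteg : ∀ g, ∃ n : ℤ, l g 1 - l g 0 = n * (2 * Real.pi * Complex.I) := by
    intro g
    refine Complex.exp_eq_one_iff.1 ?_
    rw [Complex.exp_sub, el g 1 one_mem_I, el g 0 zero_mem_I, W0, W1, div_self (hy0 _ b.2)]
  choose n hn using hinteg
  have hpi : (2 * Real.pi * Complex.I : ℂ) ≠ 0 := Complex.two_pi_I_ne_zero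
  have hmul : ∀ g h, n (g * h) = n g + n h := by
    intro g h
    obtain ⟨γ, g1, g2, g3, g4, g5⟩ := curve_cat (hW g) (hW h) (by rw [W1, W0])
    have gc := cls_cat b id continuousOn_id (mapsTo_id F) g1 g4 g5
    simp only [Function.id_comp] at gc
    rw [hWg, hWg] at gc
    obtain ⟨lc, hlc, elc⟩ := hlift γ g1
    have e1 := hcat _ _ γ _ _ lc (hl g).continuousOn (hl h).continuousOn hlc.continuousOn
      (el g) (el h) elc g4 g5
    have e2 := heq γ (W (g * h)) g1 (hW _) (by rw [g2, W0]) (by rw [g3, W1]) (W0 _) (W1 _)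
      (by rw [gc, hWg]) lc (l (g * h)) hlc.continuousOn (hl _).continuousOn elc (el _)
    rw [hn] at e2
    rw [hn, hn] at e1
    have : ((n (g * h) : ℤ) : ℂ) = ((n g + n h : ℤ) : ℂ) := by
      apply mul_right_cancel₀ hpi
      rw [← e2, e1]; push_cast; ring
    exact_mod_cast this
  refine ⟨MonoidHom.mk' (fun g => Multiplicative.ofAdd (n g)) (fun g h => by
    rw [hmul, ofAdd_add]), ?_⟩
  intro ω hω w0 w1 l' hl' el'
  have := heq ω (W (cls b ω)) hω (hW _) w0 w1 (W0 _) (W1 _) (by rw [hWg]) l' (l (cls b ω)) hl'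
    (hl _).continuousOn el' (el _)
  rw [this, hn]
  rfl

end cat
end SL

namespace SL
open Set Topology Filter
set_option linter.unusedSectionVars false

section geo
variable {ι : Type*} [Fintype ι] (m c : ι → ℂ) (N : ℝ)

/-- slopes allowed at infinity -/
def La : Set ℂ := {x | ∀ i, 1 ≠ m i * x}

noncomputable def RR (x : ℂ) : ℝ := N + ∑ i, ‖c i‖ / ‖1 - m i * x‖

noncomputable def tau (x : ℂ) : ℂ × ℂ := ((RR m c N x : ℂ) * x, (RR m c N x : ℂ))

def XX : Set (ℂ × ℂ) := {p | ∀ i, 1 ≠ m i * p.1 + c i * p.2}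

def TT : Set (ℂ × ℂ) := {p | p.1 ∈ La m ∧ ‖p.2‖ * RR m c N p.1 < 1}

def AA : Set (ℂ × ℂ) := {p | p ∈ XX m c ∧ p.2 ≠ 0}

/-- the coordinate change -/
noncomputable def iv (p : ℂ × ℂ) : ℂ × ℂ := (p.1 / p.2, 1 / p.2)

variable {m c N}

theorem iv_cont : ContinuousOn iv {p : ℂ × ℂ | p.2 ≠ 0} := by
  unfold iv
  refine ContinuousOn.prodMk (ContinuousOn.div continuousOn_fst continuousOn_snd fun p hp => hp)
    (ContinuousOn.div continuousOn_const continuousOn_snd fun p hp => hp)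

theorem iv_iv {p : ℂ × ℂ} (hp : p.2 ≠ 0) : iv (iv p) = p := by
  ext <;> simp [iv] <;> field_simp

theorem iv_AA {p : ℂ × ℂ} (hp : p ∈ AA m c) : iv p ∈ FF m c := by
  intro i h
  apply hp.1 i
  have := hp.2
  simp only [iv] at h
  field_simp at h
  linear_combination h

theorem iv_FF {p : ℂ × ℂ} (hp : p ∈ FF m c) (h0 : p.2 ≠ 0) : iv p ∈ AA m c := by
  refine ⟨fun i h => hp i ?_, by simp [iv, h0]⟩
  simp only [iv] at h
  field_simp at h
  linear_combination h

theorem RR_ge (x : ℂ) : N ≤ RR m c N x := by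
  unfold RR
  have : 0 ≤ ∑ i, ‖c i‖ / ‖1 - m i * x‖ := Finset.sum_nonneg fun i _ => by positivity
  linarith

theorem RR_cont : ContinuousOn (RR m c N) (La m) := by
  unfold RR
  refine continuousOn_const.add (continuousOn_finsetSum _ fun i _ => ?_)
  refine ContinuousOn.div continuousOn_const (by fun_prop) fun x hx => ?_
  rw [norm_ne_zero_iff, sub_ne_zero]; exact hx i

theorem tau_cont : ContinuousOn (tau m c N) (La m) := by
  unfold tau
  have h := Complex.continuous_ofReal.comp_continuousOn (RR_cont (m := m) (c := c) (N := N))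
  exact (h.mul continuousOn_id).prodMk h

theorem La_open : IsOpen (La m) := by
  have : La m = ⋂ i, {x | 1 ≠ m i * x} := by ext x; simp [La]
  rw [this]
  exact isOpen_iInter_of_finite fun i => isOpen_ne_fun continuous_const (by fun_prop)

theorem RR_lt (hN : 0 < N) {x : ℂ} (hx : x ∈ La m) (i : ι) : ‖c i‖ < RR m c N x * ‖1 - m i * x‖ := by
  have h0 : 0 < ‖1 - m i * x‖ := by
    rw [norm_pos_iff, sub_ne_zero]; exact hx i
  have h1 : ‖c i‖ / ‖1 - m i * x‖ ≤ ∑ i, ‖c i‖ / ‖1 - m i * x‖ :=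
    Finset.single_le_sum (f := fun i => ‖c i‖ / ‖1 - m i * x‖) (fun i _ => by positivity)
      (Finset.mem_univ i)
  rw [← div_lt_iff₀ h0]
  unfold RR; linarith

theorem tau_good (hN : 0 < N) {x : ℂ} (hx : x ∈ La m) (i : ι) :
    ‖c i‖ < ‖(tau m c N x).2 - m i * (tau m c N x).1‖ := by
  have h := RR_lt (c := c) hN hx i
  have e : (tau m c N x).2 - m i * (tau m c N x).1 = (RR m c N x : ℂ) * (1 - m i * x) := by
    simp only [tau]; ring
  rw [e, norm_mul, Complex.norm_real, Real.norm_of_nonneg (hN.le.trans (RR_ge x))]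
  exact h

theorem TT_sub (hN : 0 < N) : TT m c N ⊆ XX m c := by
  rintro p ⟨hx, hz⟩ i h
  have h1 := RR_lt (c := c) hN hx i
  have e : 1 - m i * p.1 = c i * p.2 := by linear_combination h
  rw [e, norm_mul] at h1
  have : ‖c i‖ * (‖p.2‖ * RR m c N p.1) ≤ ‖c i‖ * 1 :=
    mul_le_mul_of_nonneg_left hz.le (norm_nonneg _)
  linarith

theorem TT_open : IsOpen (TT m c N) := by
  have : TT m c N = (Prod.fst ⁻¹' La m) ∩ (fun p : ℂ × ℂ => ‖p.2‖ * RR m c N p.1) ⁻¹' Iio 1 := rfl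
  rw [this]
  refine ContinuousOn.isOpen_inter_preimage ?_ (La_open.preimage continuous_fst) isOpen_Iio
  exact (continuous_norm.comp continuous_snd).continuousOn.mul
    (RR_cont.comp continuousOn_fst fun p hp => hp)

theorem XX_cases {p : ℂ × ℂ} (hp : p ∈ XX m c) : p ∈ AA m c ∨ p ∈ TT m c N := by
  by_cases h : p.2 = 0
  · right
    refine ⟨fun i => ?_, by simp [h]⟩
    have := hp i
    simpa [h] using this
  · exact Or.inl ⟨hp, h⟩

theorem disc_convex (x : ℂ) (r : ℝ) : Convex ℝ {p : ℂ × ℂ | p.1 = x ∧ ‖p.2‖ ≤ r} := by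
  have : {p : ℂ × ℂ | p.1 = x ∧ ‖p.2‖ ≤ r} = {x} ×ˢ Metric.closedBall (0:ℂ) r := by
    ext p; simp
  rw [this]
  exact (convex_singleton x).prod (convex_closedBall 0 r)

theorem tdisc_convex (x : ℂ) : Convex ℝ {p : ℂ × ℂ | p ∈ TT m c N ∧ p.1 = x} := by
  rintro p ⟨⟨hp1, hp2⟩, rfl⟩ q ⟨⟨hq1, hq2⟩, hq⟩ a b' ha hb hab
  have e : (a • p + b' • q).1 = p.1 := by
    simp only [Prod.fst_add, Prod.smul_fst, hq, ← add_smul, hab, one_smul]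
  refine ⟨⟨by rw [e]; exact hp1, ?_⟩, e⟩
  rw [e]
  rw [hq] at hq2
  have h1 : ‖(a • p + b' • q).2‖ ≤ a * ‖p.2‖ + b' * ‖q.2‖ := by
    simp only [Prod.snd_add, Prod.smul_snd]
    refine (norm_add_le _ _).trans ?_
    simp [norm_smul, abs_of_nonneg ha, abs_of_nonneg hb]
  have hR : 0 ≤ RR m c N p.1 ∨ RR m c N p.1 < 0 := le_or_gt _ _
  rcases hR with hR | hR
  · have h2 := mul_le_mul_of_nonneg_right h1 hR
    by_cases h0 : a = 0
    · subst h0; simp at hab; subst hab; linarith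
    · have : 0 < a := lt_of_le_of_ne ha (Ne.symm h0)
      nlinarith
  · nlinarith [norm_nonneg (a • p + b' • q).2]

noncomputable def hp (m c : ι → ℂ) (N : ℝ) (x : ℂ) : ℂ × ℂ := (x, ((1 / (2 * RR m c N x) : ℝ) : ℂ))

theorem hp_mem (hN : 0 < N) {x : ℂ} (hx : x ∈ La m) : hp m c N x ∈ TT m c N := by
  have hR : 0 < RR m c N x := hN.trans_le (RR_ge x)
  refine ⟨hx, ?_⟩
  simp only [hp]
  rw [Complex.norm_real, Real.norm_of_nonneg (by positivity)]
  field_simp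
  norm_num

theorem hp_ne (hN : 0 < N) (x : ℂ) : (hp m c N x).2 ≠ 0 := by
  have hR : 0 < RR m c N x := hN.trans_le (RR_ge x)
  simp only [hp]
  exact_mod_cast (by positivity : (1 / (2 * RR m c N x) : ℝ) ≠ 0)

theorem XX_pc (hy : ∀ p ∈ FF m c, p.2 ≠ 0) : IsPathConnected (XX m c) := by
  have hA : IsPathConnected (AA m c) := by
    have e : AA m c = iv '' FF m c := by
      ext p; constructor
      · intro h; exact ⟨iv p, iv_AA h, iv_iv h.2⟩
      · rintro ⟨q, hq, rfl⟩; exact iv_FF hq (hy q hq)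
    rw [e]
    exact FF_pc.image' (iv_cont.mono hy)
  have hAX : AA m c ⊆ XX m c := fun p h => h.1
  obtain ⟨a, ha, h⟩ := hA
  refine ⟨a, hAX ha, fun {p} hpX => ?_⟩
  rcases XX_cases (N := 1) hpX with h' | h'
  · exact (h h').mono hAX
  · have hh := hp_mem (c := c) one_pos h'.1
    have hj : JoinedIn (XX m c) a (hp m c 1 p.1) :=
      (h ⟨TT_sub one_pos hh, hp_ne one_pos _⟩).mono hAX
    refine hj.trans (JoinedIn.of_segment_subset ?_)
    refine subset_trans ?_ (TT_sub one_pos)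
    exact subset_trans ((tdisc_convex p.1).segment_subset ⟨hh, rfl⟩ ⟨h', rfl⟩) (fun q hq => hq.1)

/-- spiral parametrization -/
noncomputable def fx (m c : ι → ℂ) (N : ℝ) (x ζ : ℂ) : ℂ × ℂ := Complex.exp (-ζ) • tau m c N x

theorem fx_mem (hN : 0 < N) {x ζ : ℂ} (hx : x ∈ La m) (hζ : ζ.re ≤ 0) : fx m c N x ζ ∈ FF m c := by
  refine rot_mem (tau_good hN hx) ?_
  rw [Complex.norm_exp]
  simpa using hζ

theorem fx_cont : ContinuousOn (fun q : ℂ × ℂ => fx m c N q.1 q.2) (La m ×ˢ univ) := by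
  unfold fx
  have h1 : ContinuousOn (fun q : ℂ × ℂ => Complex.exp (-q.2)) (La m ×ˢ univ) := by fun_prop
  exact h1.smul (tau_cont.comp continuousOn_fst fun q hq => hq.1)

theorem fx_iv (hN : 0 < N) {p : ℂ × ℂ} {ζ : ℂ} (h : Complex.exp ζ = p.2 * RR m c N p.1) :
    fx m c N p.1 ζ = iv p := by
  have hR : (RR m c N p.1 : ℂ) ≠ 0 := by
    exact_mod_cast (hN.trans_le (RR_ge p.1)).ne'
  simp only [fx, tau, iv, Complex.exp_neg, h]
  by_cases h0 : p.2 = 0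
  · rw [h0, zero_mul] at h; exact absurd h (Complex.exp_ne_zero _)
  ext <;> simp <;> field_simp

theorem fx_zero (x : ℂ) : fx m c N x 0 = tau m c N x := by simp [fx]

theorem halfplane_convex : Convex ℝ {ζ : ℂ | ζ.re ≤ 0} := convex_halfSpace_re_le 0

variable {Q : Type*} [Group Q] (b : FF m c) (q : FundamentalGroup (FF m c) b →* Q)

noncomputable def kx (m c : ι → ℂ) (N : ℝ) (b : FF m c) (q : FundamentalGroup (FF m c) b →* Q)
    (x ℓ : ℂ) : Q :=
  q (cls b (fx m c N x ∘ seg ℓ 0))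

theorem kx_indep (hN : 0 < N) (hq : ∀ x ∈ La m, ∀ k, q (cls b (rot (tau m c N x) k)) = 1)
    {x : ℂ} (hx : x ∈ La m) {ℓ ℓ' : ℂ} (h : Complex.exp ℓ = Complex.exp ℓ') (hl : ℓ.re ≤ 0) :
    kx m c N b q x ℓ = kx m c N b q x ℓ' := by
  obtain ⟨n, hn⟩ := Complex.exp_eq_exp_iff_exists_int.1 h
  have hc : ContinuousOn (fx m c N x) {ζ : ℂ | ζ.re ≤ 0} := by
    have : Continuous (fx m c N x) := by unfold fx; fun_prop
    exact this.continuousOn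
  have := cls_tri b halfplane_convex hc (fun ζ hζ => fx_mem hN hx hζ)
    (x := ℓ) (y := n * (2 * Real.pi * Complex.I)) (z := 0) hl (by simp) (by simp)
  unfold kx
  rw [← this, map_mul]
  have e2 : fx m c N x ∘ seg (n * (2 * Real.pi * Complex.I)) 0 = rot (tau m c N x) n := by
    ext1 t
    simp only [Function.comp, fx, rot, seg_def]
    congr 1
    rw [Complex.exp_eq_exp_iff_exists_int]
    refine ⟨-n, ?_⟩
    simp only [Complex.real_smul]; push_cast; ring
  have e1 : fx m c N x ∘ seg ℓ (n * (2 * Real.pi * Complex.I)) = fx m c N x ∘ seg ℓ' 0 := by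
    ext1 t
    simp only [Function.comp, fx, seg_def, hn]
    congr 1
    rw [Complex.exp_eq_exp_iff_exists_int]
    refine ⟨-n, ?_⟩
    simp only [Complex.real_smul]; push_cast; ring
  rw [e1, e2, hq x hx, mul_one]

noncomputable def kp (m c : ι → ℂ) (N : ℝ) (b : FF m c) (q : FundamentalGroup (FF m c) b →* Q)
    (p : ℂ × ℂ) : Q := kx m c N b q p.1 (Complex.log (p.2 * RR m c N p.1))

theorem re_nonpos_of {z w : ℂ} (h : Complex.exp z = w) (hw : ‖w‖ < 1) : z.re ≤ 0 := by
  rw [← h, Complex.norm_exp, Real.exp_lt_one_iff] at hw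
  exact hw.le

theorem agree (hN : 0 < N) (hq : ∀ x ∈ La m, ∀ k, q (cls b (rot (tau m c N x) k)) = 1)
    {γ : ℝ → ℂ × ℂ} (hT : Curve (TT m c N) γ) (hA : ∀ t ∈ Icc (0:ℝ) 1, (γ t).2 ≠ 0) :
    q (cls b (iv ∘ γ)) =
      kp m c N b q (γ 0) * q (cls b (fun t => tau m c N (γ t).1)) * (kp m c N b q (γ 1))⁻¹ := by
  have hR : ∀ x, (0:ℝ) < RR m c N x := fun x => hN.trans_le (RR_ge x)
  have hRc : ∀ x, (RR m c N x : ℂ) ≠ 0 := fun x => by exact_mod_cast (hR x).ne'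
  have c1 : ContinuousOn (fun t => (γ t).1) (Icc 0 1) := continuous_fst.comp_continuousOn hT.1
  have c2 : ContinuousOn (fun t => (γ t).2) (Icc 0 1) := continuous_snd.comp_continuousOn hT.1
  have hn : ∀ t ∈ Icc (0:ℝ) 1, ‖(γ t).2 * (RR m c N (γ t).1 : ℂ)‖ < 1 := by
    intro t ht
    rw [norm_mul, Complex.norm_real, Real.norm_of_nonneg (hR _).le]
    exact (hT.2 ht).2
  have hne : ∀ t ∈ Icc (0:ℝ) 1, (γ t).2 * (RR m c N (γ t).1 : ℂ) ≠ 0 := fun t ht =>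
    mul_ne_zero (hA t ht) (hRc _)
  obtain ⟨l, hl, el⟩ := log_lift (u := fun t => (γ t).2 * (RR m c N (γ t).1 : ℂ))
    (c2.mul (Complex.continuous_ofReal.comp_continuousOn (RR_cont.comp c1 fun t ht => (hT.2 ht).1)))
    hne
  have hre : ∀ t ∈ Icc (0:ℝ) 1, (l t).re ≤ 0 := fun t ht => re_nonpos_of (el t ht) (hn t ht)
  have sq := cls_square b (H := fun z => fx m c N (γ z.1).1 (seg (l z.1) 0 z.2)) ?_ ?_
  · simp only [seg_zero, seg_one, fx_zero] at sq
    have e0 : cls b (fun t => fx m c N (γ t).1 (l t)) = cls b (iv ∘ γ) :=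
      cls_congr b fun t ht => fx_iv hN (el t ht)
    rw [e0] at sq
    have sq' := congrArg q sq
    rw [map_mul, map_mul] at sq'
    have k1 : ∀ t ∈ Icc (0:ℝ) 1, q (cls b (fun s => fx m c N (γ t).1 (seg (l t) 0 s))) =
        kp m c N b q (γ t) := by
      intro t ht
      exact kx_indep b q hN hq (hT.2 ht).1
        (by rw [el t ht, Complex.exp_log (hne t ht)]) (hre t ht)
    rw [k1 0 zero_mem_I, k1 1 one_mem_I] at sq'
    rw [← sq', mul_inv_cancel_right]
  · have : ContinuousOn (fun z : ℝ × ℝ => ((γ z.1).1, seg (l z.1) 0 z.2)) (Icc 0 1 ×ˢ Icc 0 1) := by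
      refine ContinuousOn.prodMk (c1.comp continuousOn_fst fun z hz => hz.1) ?_
      simp only [seg_def]
      fun_prop
    exact fx_cont.comp this fun z hz => ⟨(hT.2 hz.1).1, mem_univ _⟩
  · rintro z ⟨hz1, hz2⟩
    exact fx_mem hN (hT.2 hz1).1 (seg_mem halfplane_convex (hre _ hz1) (by simp) hz2)

theorem kernel (hN : 0 < N) (hy : ∀ p ∈ FF m c, p.2 ≠ 0) [PathConnectedSpace (XX m c)]
    (hq : ∀ x ∈ La m, ∀ k, q (cls b (rot (tau m c N x) k)) = 1) (b' : XX m c)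
    (hb' : iv b = b') {ω : ℝ → ℂ × ℂ}
    (hω : Curve (FF m c) ω) (w0 : ω 0 = b) (w1 : ω 1 = b)
    (h : cls b' (iv ∘ ω) = 1) : q (cls b ω) = 1 := by
  let ΦT : (ℝ → ℂ × ℂ) → Q := fun γ =>
    kp m c N b q (γ 0) * q (cls b (fun t => tau m c N (γ t).1)) * (kp m c N b q (γ 1))⁻¹
  let e : (ℝ → ℂ × ℂ) → Q := fun γ =>
    if ∀ t ∈ Icc (0:ℝ) 1, (γ t).2 ≠ 0 then q (cls b (iv ∘ γ)) else ΦT γ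
  have eA : ∀ γ : ℝ → ℂ × ℂ, (∀ t ∈ Icc (0:ℝ) 1, (γ t).2 ≠ 0) → e γ = q (cls b (iv ∘ γ)) :=
    fun γ hγ => if_pos hγ
  have eT : ∀ γ : ℝ → ℂ × ℂ, Curve (TT m c N) γ → e γ = ΦT γ := by
    intro γ hγ
    by_cases h : ∀ t ∈ Icc (0:ℝ) 1, (γ t).2 ≠ 0
    · rw [eA γ h]; exact agree b q hN hq hγ h
    · exact if_neg h
  have hAc : ContinuousOn iv (AA m c) := iv_cont.mono fun p hp => hp.2
  have cX : Curve (XX m c) (iv ∘ ω) := ⟨(iv_cont.mono hy).comp hω.1 hω.2,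
    fun t ht => (iv_FF (hω.2 ht) (hy _ (hω.2 ht))).1⟩
  obtain ⟨H, Hc, HX, H0, H1, Ht, Hb⟩ := exists_null cX (by simp [w0, hb']) (by simp [w1, hb']) h
  have hbot : ∀ t ∈ Icc (0:ℝ) 1, H (t, 0) ∈ AA m c := by
    intro t ht
    have := Hb ht
    simp only [Function.comp] at this
    rw [this]
    exact iv_FF (hω.2 ht) (hy _ (hω.2 ht))
  have key := grid_null e (X := XX m c) ?_ ?_ Hc HX H0 H1 Ht ?_
  · rw [eA _ (fun t ht => (hbot t ht).2)] at key
    rw [← key]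
    congr 1
    refine cls_congr b fun t ht => ?_
    have := Hb ht
    simp only [Function.comp] at this ⊢
    rw [this, iv_iv (hy _ (hω.2 ht))]
  · intro x hx
    rcases XX_cases (N := N) hx with h | h
    · rw [eA _ (fun _ _ => h.2)]
      have : iv ∘ (fun _ : ℝ => x) = fun _ => iv x := rfl
      rw [this, cls_const, map_one]
    · rw [eT _ ⟨continuousOn_const, fun _ _ => h⟩]
      simp only [ΦT]
      rw [cls_const, map_one, mul_one, mul_inv_cancel]
  · intro p hp
    by_cases h : p.2 = 0
    · have hpT : p ∈ TT m c N := (XX_cases hp).resolve_left fun h' => h'.2 h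
      refine ⟨TT m c N, TT_open.mem_nhds hpT, fun K f hK hf _ hfT x hx y hy' z hz => ?_⟩
      have cs : ∀ x ∈ K, ∀ y ∈ K, Curve (TT m c N) (f ∘ seg x y) := fun x hx y hy =>
        ⟨hf.comp (seg_cont x y).continuousOn (fun _ ht => seg_mem hK hx hy ht),
          fun _ ht => hfT (seg_mem hK hx hy ht)⟩
      rw [eT _ (cs x hx y hy'), eT _ (cs y hy' z hz), eT _ (cs x hx z hz)]
      have := cls_tri b hK (f := fun s => tau m c N (f s).1)
        (tau_cont.comp (continuous_fst.comp_continuousOn hf) fun s hs => (hfT hs).1)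
        (fun s hs => by
          have := fx_mem (c := c) (ζ := 0) hN (hfT hs).1 (by simp)
          rwa [fx_zero] at this) hx hy' hz
      have t1 := congrArg q this
      rw [map_mul] at t1
      have t2 : q (cls b fun t => tau m c N (f (seg x y t)).1) *
          q (cls b fun t => tau m c N (f (seg y z t)).1) =
          q (cls b fun t => tau m c N (f (seg x z t)).1) := t1
      simp only [ΦT, Function.comp, seg_zero, seg_one]
      rw [← t2]
      group
    · refine ⟨{p | p.2 ≠ 0}, (isOpen_ne_fun continuous_snd continuous_const).mem_nhds h,
        fun K f hK hf hfX hfU x hx y hy' z hz => ?_⟩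
      have hs : ∀ x ∈ K, ∀ y ∈ K, ∀ t ∈ Icc (0:ℝ) 1, ((f ∘ seg x y) t).2 ≠ 0 :=
        fun x hx y hy t ht => hfU (seg_mem hK hx hy ht)
      rw [eA _ (hs x hx y hy'), eA _ (hs y hy' z hz), eA _ (hs x hx z hz), ← map_mul]
      congr 1
      exact cls_tri b hK (f := iv ∘ f) (iv_cont.comp hf hfU)
        (fun s hs => iv_AA ⟨hfX hs, hfU hs⟩) hx hy' hz
  · intro r hr s hs t ht
    have mm : ∀ r ∈ Icc (0:ℝ) 1, ∀ s ∈ Icc (0:ℝ) 1, ∀ t ∈ Icc (0:ℝ) 1,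
        (((fun x => H (x, 0)) ∘ seg r s) t).2 ≠ 0 := fun r hr s hs t ht =>
      (hbot _ (seg_mem (convex_Icc 0 1) hr hs ht)).2
    rw [eA _ (mm r hr s hs), eA _ (mm s hs t ht), eA _ (mm r hr t ht), ← map_mul]
    congr 1
    refine cls_sub b (ω := iv ∘ fun x => H (x, 0)) ⟨?_, fun t ht => iv_AA (hbot t ht)⟩ hr hs ht
    exact hAc.comp (by fun_prop) hbot

end geo
end SL

namespace SL
open Set Topology Filter
set_option linter.unusedSectionVars false

section surj
variable {E E' : Type*} [TopologicalSpace E] [TopologicalSpace E'] {F : Set E} {X : Set E'}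
  [PathConnectedSpace F] [PathConnectedSpace X]

theorem exists_curve (b p : F) : ∃ α : ℝ → E, Curve F α ∧ α 0 = b ∧ α 1 = p := by
  let P := PathConnectedSpace.somePath b p
  refine ⟨fun t => (P.extend t : F), ⟨by fun_prop, fun t _ => Subtype.property _⟩, by simp, by simp⟩

theorem range_mem {b : F} (f : C(F, X)) (f0 : E → E') (hf : ∀ p : F, f0 p = f p)
    {α ω β : ℝ → E} (hα : Curve F α) (hω : Curve F ω) (hβ : Curve F β) (a0 : α 0 = b)
    (b0 : β 0 = b) (h1 : α 1 = ω 0) (h2 : ω 1 = β 1) :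
    cls (f b) (f0 ∘ α) * cls (f b) (f0 ∘ ω) * (cls (f b) (f0 ∘ β))⁻¹ ∈
      (FundamentalGroup.map f b).range := by
  have hfc : ContinuousOn f0 F := by
    rw [continuousOn_iff_continuous_domRestrict]
    have : F.domRestrict f0 = fun p => ((f p : X) : E') := by ext p; exact hf p
    rw [this]; fun_prop
  have hfm : MapsTo f0 F X := fun p hp => by
    have := hf ⟨p, hp⟩
    simp only at this
    rw [this]; exact Subtype.property _
  obtain ⟨γ, g1, g2, g3, g4, g5⟩ := curve_cat hα hω h1
  obtain ⟨γ', k1, k2, k3, k4, k5⟩ := curve_cat g1 (curve_rev hβ) (by simp [g3, h2])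
  have e1 := cls_cat (f b) f0 hfc hfm g1 g4 g5
  have e2 := cls_cat (f b) f0 hfc hfm k1 k4 k5
  have e3 : cls (f b) (f0 ∘ (β ∘ seg 1 0)) = (cls (f b) (f0 ∘ β))⁻¹ :=
    cls_rev (f b) (α := f0 ∘ β) ⟨hfc.comp hβ.1 hβ.2, hfm.comp hβ.2⟩
  rw [e3, e1] at e2
  rw [← e2, ← map_cls f f0 hf k1 (by rw [k2, g2, a0]) (by simp [k3, b0])]
  exact ⟨_, rfl⟩

end surj

section geo
variable {ι : Type*} [Fintype ι] {m c : ι → ℂ} {N : ℝ}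

theorem fib_move (hN : 0 < N) [PathConnectedSpace (XX m c)] (b' : XX m c) {p : ℂ × ℂ}
    (hp' : p ∈ TT m c N) (h0 : p.2 ≠ 0) :
    ∃ ω, Curve (AA m c) ω ∧ ω 0 = p ∧ ω 1 = hp m c N p.1 ∧
      cls b' ω = cls b' (seg p (hp m c N p.1)) := by
  have hR : (0:ℝ) < RR m c N p.1 := hN.trans_le (RR_ge _)
  have hRc : (RR m c N p.1 : ℂ) ≠ 0 := by exact_mod_cast hR.ne'
  let u : ℂ := p.2 * RR m c N p.1
  have hu0 : u ≠ 0 := mul_ne_zero h0 hRc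
  have hu : ‖u‖ < 1 := by
    simp only [u]
    rw [norm_mul, Complex.norm_real, Real.norm_of_nonneg hR.le]
    exact hp'.2
  let ω : ℝ → ℂ × ℂ := fun t =>
    (p.1, Complex.exp (seg (Complex.log u) (Complex.log (1/2)) t) / RR m c N p.1)
  have w0 : ω 0 = p := by
    simp only [ω, seg_zero, Complex.exp_log hu0, u]
    ext
    · rfl
    · simp only; field_simp
  have w1 : ω 1 = hp m c N p.1 := by
    simp only [ω, seg_one, hp]
    rw [Complex.exp_log (by norm_num)]
    ext
    · rfl
    · push_cast; field_simp
  have hre : ∀ t ∈ Icc (0:ℝ) 1, (seg (Complex.log u) (Complex.log (1/2)) t).re < 0 := by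
    intro t ht
    refine seg_mem (convex_halfSpace_re_lt 0) ?_ ?_ ht
    · simp only [mem_ofPred_eq, Complex.log_re]
      exact Real.log_neg (norm_pos_iff.2 hu0) hu
    · simp only [mem_ofPred_eq, Complex.log_re]
      exact Real.log_neg (by norm_num) (by norm_num)
  have hK : Curve {q : ℂ × ℂ | q ∈ TT m c N ∧ q.1 = p.1} ω := by
    constructor
    · have := seg_cont (Complex.log u) (Complex.log (1/2))
      exact (Continuous.prodMk continuous_const
        ((Complex.continuous_exp.comp this).div_const _)).continuousOn
    · intro t ht
      refine ⟨⟨hp'.1, ?_⟩, rfl⟩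
      simp only [ω]
      rw [norm_div, Complex.norm_real, Real.norm_of_nonneg hR.le, div_mul_cancel₀ _ hR.ne',
        Complex.norm_exp, Real.exp_lt_one_iff]
      exact hre t ht
  refine ⟨ω, ⟨hK.1, fun t ht => ⟨TT_sub hN (hK.2 ht).1, div_ne_zero (Complex.exp_ne_zero _) hRc⟩⟩,
    w0, w1, ?_⟩
  rw [cls_convex b' (tdisc_convex p.1) (fun q hq => TT_sub hN hq.1) hK, w0, w1]

theorem surj (hN : 0 < N) (hy : ∀ p ∈ FF m c, p.2 ≠ 0) [PathConnectedSpace (XX m c)]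
    (f : C(FF m c, XX m c)) (hf : ∀ p : FF m c, iv p = f p) (b : FF m c) :
    Function.Surjective (FundamentalGroup.map f b) := by
  let S := (FundamentalGroup.map f b).range
  have hex : ∀ p : ℂ × ℂ, ∃ α : ℝ → ℂ × ℂ, p ∈ AA m c →
      Curve (FF m c) α ∧ α 0 = b ∧ α 1 = iv p := by
    intro p
    by_cases h : p ∈ AA m c
    · obtain ⟨α, hα⟩ := exists_curve b ⟨iv p, iv_AA h⟩
      exact ⟨α, fun _ => hα⟩
    · exact ⟨fun _ => 0, fun h' => absurd h' h⟩
  choose α hα using hex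
  let kA : ℂ × ℂ → FundamentalGroup (XX m c) (f b) := fun p => cls (f b) (iv ∘ α p)
  let k : ℂ × ℂ → FundamentalGroup (XX m c) (f b) := fun p =>
    if p.2 ≠ 0 then kA p else kA (hp m c N p.1) * cls (f b) (seg (hp m c N p.1) p)
  have kpos : ∀ p : ℂ × ℂ, p.2 ≠ 0 → k p = kA p := fun p h => if_pos h
  -- curves in `AA`
  have F1 : ∀ ω, Curve (AA m c) ω → kA (ω 0) * cls (f b) ω * (kA (ω 1))⁻¹ ∈ S := by
    intro ω hω
    obtain ⟨a1, a2, a3⟩ := hα _ (hω.2 zero_mem_I)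
    obtain ⟨b1, b2, b3⟩ := hα _ (hω.2 one_mem_I)
    have := range_mem f iv hf a1 (ω := iv ∘ ω) ⟨(iv_cont.mono fun p hp => hp.2).comp hω.1 hω.2,
      fun t ht => iv_AA (hω.2 ht)⟩ b1 a2 b2 a3 b3.symm
    rw [cls_congr (f b) (ω := iv ∘ iv ∘ ω) (ω' := ω) fun t ht => iv_iv (hω.2 ht).2] at this
    exact this
  -- fibre moves
  have F2 : ∀ p ∈ TT m c N,
      k p * cls (f b) (seg p (hp m c N p.1)) * (kA (hp m c N p.1))⁻¹ ∈ S := by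
    intro p hpT
    by_cases h : p.2 = 0
    · have : k p = kA (hp m c N p.1) * cls (f b) (seg (hp m c N p.1) p) :=
        if_neg (not_not.2 h)
      have e := cls_seg_inv (f b) (tdisc_convex p.1) (f := id) continuousOn_id
        (fun q (hq : q ∈ {q : ℂ × ℂ | q ∈ TT m c N ∧ q.1 = p.1}) => TT_sub hN hq.1)
        ⟨hp_mem hN hpT.1, rfl⟩ ⟨hpT, rfl⟩
      rw [Function.id_comp, Function.id_comp] at e
      rw [this, e, mul_inv_cancel_right, mul_inv_cancel]
      exact S.one_mem
    · obtain ⟨ω, h1, h2, h3, h4⟩ := fib_move hN (f b) hpT h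
      rw [kpos p h, ← h4, ← h3]
      nth_rewrite 1 [← h2]
      exact F1 ω h1
  -- curves in `TT`
  have F3 : ∀ ω, Curve (TT m c N) ω → k (ω 0) * cls (f b) ω * (k (ω 1))⁻¹ ∈ S := by
    intro ω hω
    have c1 : ContinuousOn (fun t => (ω t).1) (Icc 0 1) := continuous_fst.comp_continuousOn hω.1
    have hR : ∀ x, (0:ℝ) < RR m c N x := fun x => hN.trans_le (RR_ge x)
    have c2 : ContinuousOn (fun t => hp m c N (ω t).1) (Icc 0 1) := by
      unfold hp
      refine c1.prodMk (Complex.continuous_ofReal.comp_continuousOn ?_)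
      refine ContinuousOn.div continuousOn_const
        (continuousOn_const.mul (RR_cont.comp c1 fun t ht => (hω.2 ht).1)) fun t ht => ?_
      have := hR (ω t).1
      positivity
    have hA : Curve (AA m c) (fun t => hp m c N (ω t).1) :=
      ⟨c2, fun t ht => ⟨TT_sub hN (hp_mem hN (hω.2 ht).1), hp_ne hN _⟩⟩
    have sq := cls_square (f b) (H := fun q => seg (ω q.1) (hp m c N (ω q.1).1) q.2) ?_ ?_
    · simp only [seg_zero, seg_one] at sq
      have g0 := F2 _ (hω.2 zero_mem_I)
      have g1 := F2 _ (hω.2 one_mem_I)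
      have g2 := F1 _ hA
      have := S.mul_mem (S.mul_mem g0 g2) (S.inv_mem g1)
      convert this using 1
      have sq' := eq_mul_inv_of_mul_eq sq
      have e : cls (f b) ω = cls (f b) (fun t => ω t) := rfl
      rw [e, sq']
      group
    · simp only [seg_def]
      have h1 : ContinuousOn (fun q : ℝ × ℝ => ω q.1) (Icc 0 1 ×ˢ Icc 0 1) :=
        hω.1.comp continuousOn_fst fun q hq => hq.1
      have h2 : ContinuousOn (fun q : ℝ × ℝ => hp m c N (ω q.1).1) (Icc 0 1 ×ˢ Icc 0 1) :=
        c2.comp continuousOn_fst fun q hq => hq.1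
      exact h1.add (continuousOn_snd.smul (h2.sub h1))
    · rintro q ⟨hq1, hq2⟩
      exact TT_sub hN (seg_mem (tdisc_convex (ω q.1).1) ⟨hω.2 hq1, rfl⟩
        ⟨hp_mem hN (hω.2 hq1).1, rfl⟩ hq2).1
  intro g
  obtain ⟨ω, hω, w0, w1, rfl⟩ := cls_surj (f b) g
  have hmain := cls_local (f b) S k ?_ hω
  · have hbA : iv b ∈ AA m c := iv_FF b.2 (hy _ b.2)
    have hb2 : ((f b : XX m c) : ℂ × ℂ) ∈ AA m c := by rw [← hf]; exact hbA
    rw [w0, w1, kpos _ hb2.2] at hmain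
    have hk : kA (f b) ∈ S := by
      obtain ⟨a1, a2, a3⟩ := hα _ hb2
      refine ⟨cls b (α (f b)), ?_⟩
      refine map_cls f iv hf a1 a2 ?_
      rw [a3, ← hf, iv_iv (hy _ b.2)]
    have := S.mul_mem (S.mul_mem (S.inv_mem hk) hmain) hk
    have e : ∀ a g : FundamentalGroup (XX m c) (f b), a⁻¹ * (a * g * a⁻¹) * a = g := by
      intro a g; group
    rw [e] at this
    exact this
  · intro p hp'
    by_cases h : p.2 = 0
    · have hpT : p ∈ TT m c N := (XX_cases hp').resolve_left fun h' => h'.2 h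
      exact ⟨TT m c N, TT_open.mem_nhds hpT, fun ω h1 h2 => F3 ω ⟨h1.1, h2⟩⟩
    · refine ⟨{p | p.2 ≠ 0}, (isOpen_ne_fun continuous_snd continuous_const).mem_nhds h,
        fun ω h1 h2 => ?_⟩
      rw [kpos _ (h2 zero_mem_I), kpos _ (h2 one_mem_I)]
      exact F1 ω ⟨h1.1, fun t ht => ⟨h1.2 ht, h2 ht⟩⟩

theorem La_pc : IsPathConnected (La m) := by
  have hf : {x : ℂ | ∃ i, 1 = m i * x}.Countable := by
    refine ((finite_range fun i => (m i)⁻¹).subset ?_).countable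
    rintro x ⟨i, hi⟩
    refine ⟨i, ?_⟩
    have h0 : m i ≠ 0 := by rintro h; simp [h] at hi
    simp only
    field_simp
    exact hi
  have := hf.isPathConnected_compl_of_one_lt_rank (by rw [Complex.rank_real_complex]; norm_num)
  convert this using 1
  ext x; simp [La]

theorem exists_N (hm : Function.Injective m) {ε C ρ : ℝ} (hε : 0 < ε) : ∃ N : ℝ, 0 < N ∧ ∀ r, N ≤ r →
    C < r / 2 ∧ ρ ≤ r / 2 - C ∧ ∀ i j, i ≠ j → 2 * ρ + 2 * C < r * (ε * ‖m i - m j‖) := by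
  have h : ∀ᶠ r : ℝ in atTop, C < r / 2 ∧ ρ ≤ r / 2 - C ∧
      ∀ i j, i ≠ j → 2 * ρ + 2 * C < r * (ε * ‖m i - m j‖) := by
    refine ((eventually_gt_atTop (2 * C)).mono fun r h => by linarith).and
      (((eventually_ge_atTop (2 * (C + ρ))).mono fun r h => by linarith).and ?_)
    refine eventually_all.2 fun i => eventually_all.2 fun j => ?_
    by_cases hij : i = j
    · simp [hij]
    · have hp : 0 < ε * ‖m i - m j‖ := by
        have : m i - m j ≠ 0 := sub_ne_zero.2 (hm.ne hij)
        positivity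
      exact ((tendsto_id.atTop_mul_const hp).eventually_gt_atTop _).mono fun r h _ => h
  obtain ⟨N, hN⟩ := eventually_atTop.1 h
  exact ⟨max N 1, by positivity, fun r hr => hN r ((le_max_left _ _).trans hr)⟩

end geo
end SL

namespace SL
open Set Topology Filter
set_option linter.unusedSectionVars false

section core
variable {ι : Type*} [Fintype ι] {m c : ι → ℂ}

theorem cls_rot_add (b : FF m c) (hb : ∀ i, ‖c i‖ < ‖(b : ℂ × ℂ).2 - m i * (b : ℂ × ℂ).1‖) (j k : ℤ) :
    cls b (rot b (j + k)) = cls b (rot b j) * cls b (rot b k) := by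
  let f : ℝ → ℂ × ℂ := fun s => Complex.exp (2 * Real.pi * Complex.I * s) • (b : ℂ × ℂ)
  have hf : ContinuousOn f univ := by
    have : Continuous f := by fun_prop
    exact this.continuousOn
  have hm : MapsTo f univ (FF m c) := fun s _ => by
    refine rot_mem hb ?_
    have := norm_rot 1 s
    simp only [Int.cast_one, mul_one] at this
    exact this.ge
  have e : ∀ j k : ℤ, f ∘ seg (j:ℝ) ((j + k : ℤ) : ℝ) = rot b k := by
    intro j k
    ext1 t
    simp only [Function.comp, f, rot, seg_def]
    congr 1
    rw [Complex.exp_eq_exp_iff_exists_int]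
    refine ⟨j, ?_⟩
    simp only [smul_eq_mul]; push_cast; ring
  have := cls_tri b convex_univ hf hm (mem_univ ((0:ℤ):ℝ)) (mem_univ ((0 + j : ℤ):ℝ))
    (mem_univ ((0 + j + k : ℤ):ℝ))
  rw [e 0 j, e (0 + j) k, add_assoc, e 0 (j + k)] at this
  exact this.symm

theorem core_base (hm : Function.Injective m) (hy : ∀ p ∈ FF m c, p.2 ≠ 0) :
    ∃ (b : FF m c) (b' : XX m c), Nonempty (FundamentalGroup (FF m c) b ≃*
      (FundamentalGroup (XX m c) b' × Multiplicative ℤ)) := by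
  have : PathConnectedSpace (XX m c) := isPathConnected_iff_pathConnectedSpace.1 (XX_pc hy)
  -- constants
  let M : ℝ := ∑ i, ‖m i‖
  let C : ℝ := ∑ i, ‖c i‖
  have hM : ∀ i, ‖m i‖ ≤ M := fun i =>
    Finset.single_le_sum (f := fun i => ‖m i‖) (fun i _ => norm_nonneg _) (Finset.mem_univ i)
  have hC : ∀ i, ‖c i‖ ≤ C := fun i =>
    Finset.single_le_sum (f := fun i => ‖c i‖) (fun i _ => norm_nonneg _) (Finset.mem_univ i)
  have hM0 : 0 ≤ M := Finset.sum_nonneg fun i _ => norm_nonneg _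
  have hC0 : 0 ≤ C := Finset.sum_nonneg fun i _ => norm_nonneg _
  let ε : ℝ := 1 / (2 * (M + 1))
  have hε : 0 < ε := by positivity
  have hεM : M * ε < 1 / 2 := by
    simp only [ε]; rw [mul_one_div, div_lt_iff₀ (by positivity)]; linarith
  have hεm : ∀ i, ‖m i‖ * ε < 1 / 2 := fun i =>
    (mul_le_mul_of_nonneg_right (hM i) hε.le).trans_lt hεM
  obtain ⟨N, hN, hNr⟩ := exists_N (m := m) (C := C) (ρ := 2 * C + 1) hm hε
  have hxs : (ε : ℂ) ∈ La m := by
    intro i h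
    have := congrArg norm h
    rw [norm_one, norm_mul, Complex.norm_real, Real.norm_of_nonneg hε.le] at this
    linarith [hεm i]
  let r : ℝ := RR m c N ε
  have hr : N ≤ r := RR_ge _
  have hr0 : 0 < r := hN.trans_le hr
  have hrc : (r : ℂ) ≠ 0 := by exact_mod_cast hr0.ne'
  obtain ⟨n1, n2, n3⟩ := hNr r hr
  have htau : tau m c N ε = ((r:ℂ) * ε, (r:ℂ)) := rfl
  have hgood := tau_good (c := c) hN hxs
  let b : FF m c := ⟨tau m c N ε, by
    have := fx_mem (c := c) (ζ := 0) hN hxs (by simp)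
    rwa [fx_zero] at this⟩
  have hb : (b : ℂ × ℂ) = ((r:ℂ) * ε, (r:ℂ)) := rfl
  -- centrality
  have hcent := rot_central b hm (ρ := 2 * C + 1) (by
      show S0 m c (b : ℂ × ℂ).1 < (b : ℂ × ℂ).2.re
      rw [hb]
      simp only [S0, Complex.ofReal_re]
      rw [Finset.sum_add_distrib, ← Finset.sum_mul, norm_mul, Complex.norm_real, Complex.norm_real,
        Real.norm_of_nonneg hr0.le, Real.norm_of_nonneg hε.le]
      show M * (r * ε) + C < r
      nlinarith) (by positivity) (fun i => by linarith [hC i]) (fun i => by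
      rw [hb]
      have e : (r:ℂ) = ((r:ℂ) - (m i * (r * ε) + c i)) + m i * (r * ε) + c i := by ring
      have h1 := congrArg norm e
      have h2 := norm_add₃_le (a := (r:ℂ) - (m i * (r * ε) + c i)) (b := m i * (r * ε)) (c := c i)
      rw [← h1, norm_mul, norm_mul, Complex.norm_real, Complex.norm_real,
        Real.norm_of_nonneg hr0.le, Real.norm_of_nonneg hε.le] at h2
      show 2 * C + 1 ≤ ‖(r:ℂ) - (m i * (r * ε) + c i)‖
      have h3 : ‖m i‖ * (r * ε) ≤ r / 2 := by nlinarith [hεm i]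
      linarith [hC i]) (fun i j hij => by
      rw [hb]
      show 2 * (2 * C + 1) < ‖(m i * (r * ε) + c i) - (m j * (r * ε) + c j)‖
      have e : (r * ε) * (m i - m j) = ((m i * (r * ε) + c i) - (m j * (r * ε) + c j)) + (-c i) + c j := by
        ring
      have h1 := congrArg norm e
      have h2 := norm_add₃_le (a := (m i * (r * ε) + c i) - (m j * (r * ε) + c j)) (b := -c i)
        (c := c j)
      rw [← h1, norm_mul, norm_mul, Complex.norm_real, Complex.norm_real, norm_neg,
        Real.norm_of_nonneg hr0.le, Real.norm_of_nonneg hε.le] at h2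
      have h3 := n3 i j hij
      have e2 : r * ε * ‖m i - m j‖ = r * (ε * ‖m i - m j‖) := by ring
      linarith [hC i, hC j])
  -- the central subgroup
  let ψ : Multiplicative ℤ →* FundamentalGroup (FF m c) b :=
    MonoidHom.mk' (fun k => cls b (rot b (Multiplicative.toAdd k)))
      (fun j k => cls_rot_add b hgood _ _)
  have hψ : ∀ k, ψ k = cls b (rot b (Multiplicative.toAdd k)) := fun k => rfl
  have hnorm : (ψ.range).Normal := by
    constructor
    rintro _ ⟨k, rfl⟩ g
    refine ⟨k, ?_⟩
    rw [hψ, hcent, mul_inv_cancel_right]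
  let q := QuotientGroup.mk' ψ.range
  have hq : ∀ x ∈ La m, ∀ k, q (cls b (rot (tau m c N x) k)) = 1 := by
    intro x hx k
    have : PathConnectedSpace (La m) := isPathConnected_iff_pathConnectedSpace.1 La_pc
    obtain ⟨l, hl, l0, l1⟩ := exists_curve (⟨ε, hxs⟩ : La m) ⟨x, hx⟩
    have := rot_sweep b k (ω := fun t => tau m c N (l t)) (tau_cont.comp hl.1 hl.2)
      (fun t ht => tau_good hN (hl.2 ht))
    have h1 : q (cls b (rot b k)) = 1 := by
      rw [← MonoidHom.mem_ker, QuotientGroup.ker_mk']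
      exact ⟨Multiplicative.ofAdd k, rfl⟩
    have h2 := congrArg q this
    rw [map_mul, map_mul] at h2
    simp only [l0, l1] at h2
    have h3 : q (cls b (rot (tau m c N ε) k)) = 1 := h1
    rw [h3, one_mul] at h2
    exact mul_eq_left.1 h2
  -- the map
  let f : C(FF m c, XX m c) := ⟨fun p => ⟨iv p, (iv_FF p.2 (hy _ p.2)).1⟩, by
    refine Continuous.subtype_mk ?_ _
    exact continuousOn_iff_continuous_domRestrict.1 (iv_cont.mono hy)⟩
  have hf : ∀ p : FF m c, iv p = f p := fun p => rfl
  let π := FundamentalGroup.map f b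
  have hsurj : Function.Surjective π := surj hN hy f hf b
  have hker : ∀ g, π g = 1 → g ∈ ψ.range := by
    intro g hg
    obtain ⟨ω, hω, w0, w1, rfl⟩ := cls_surj b g
    have hg' : cls (f b) (iv ∘ ω) = 1 := by rw [← map_cls f iv hf hω w0 w1]; exact hg
    have := kernel b q hN hy hq (f b) (hf b) hω w0 w1 hg'
    rw [← MonoidHom.mem_ker, QuotientGroup.ker_mk'] at this
    exact this
  have hrotc : ∀ k, Curve (FF m c) (rot b k) := fun k =>
    ⟨by
      have : Continuous (rot b k) := by unfold rot; fun_prop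
      exact this.continuousOn, fun t _ => rot_mem hgood (norm_rot k t).ge⟩
  have hπψ : ∀ k, π (ψ k) = 1 := by
    intro k
    rw [hψ]
    generalize Multiplicative.toAdd k = k
    have h1 : π (cls b (rot b k)) = cls (f b) (iv ∘ rot b k) :=
      map_cls f iv hf (hrotc k) (rot_zero _ _) (rot_one _ _)
    rw [h1, cls_convex (f b) (disc_convex (ε : ℂ) (1 / r)) ?_ ⟨?_, ?_⟩]
    · simp only [Function.comp, rot_zero, rot_one]
      have : seg (iv b) (iv b) = fun _ => iv b := by ext1 t; simp
      rw [this, cls_const]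
    · rintro p ⟨h1, h2⟩ i h
      have h3 := RR_lt (c := c) hN hxs i
      have e : 1 - m i * (ε:ℂ) = c i * p.2 := by rw [← h1]; linear_combination h
      rw [e, norm_mul] at h3
      have h4 : r * (‖c i‖ * ‖p.2‖) ≤ ‖c i‖ := by
        have : ‖c i‖ * ‖p.2‖ ≤ ‖c i‖ * (1 / r) := mul_le_mul_of_nonneg_left h2 (norm_nonneg _)
        calc _ ≤ r * (‖c i‖ * (1 / r)) := mul_le_mul_of_nonneg_left this hr0.le
          _ = ‖c i‖ := by field_simp
      exact absurd h3 (not_lt.2 h4)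
    · exact (iv_cont.mono hy).comp (hrotc k).1 (hrotc k).2
    · intro t _
      have he : Complex.exp (2 * Real.pi * Complex.I * k * t) ≠ 0 := Complex.exp_ne_zero _
      have hn := norm_rot k t
      constructor
      · simp only [Function.comp, rot, hb, iv, Prod.smul_fst, Prod.smul_snd, smul_eq_mul]
        field_simp
      · simp only [Function.comp, rot, hb, iv, Prod.smul_snd, smul_eq_mul]
        rw [norm_div, norm_mul, hn, Complex.norm_real, Real.norm_of_nonneg hr0.le, norm_one, one_mul]
  obtain ⟨φ, hφ⟩ := winding b Prod.snd continuousOn_snd hy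
  have hφψ : ∀ k, φ (ψ k) = k := by
    intro k
    have := hφ (rot b (Multiplicative.toAdd k)) (hrotc _) (rot_zero _ _) (rot_one _ _)
      (fun t => Complex.log r + 2 * Real.pi * Complex.I * (Multiplicative.toAdd k) * t)
      (by fun_prop) (fun t _ => by
        rw [Complex.exp_add, Complex.exp_log hrc]
        simp only [rot, hb, Prod.smul_snd, smul_eq_mul]
        ring)
    rw [hψ]
    have hpi : (2 * Real.pi * Complex.I : ℂ) ≠ 0 := Complex.two_pi_I_ne_zero
    have h2 : ((Multiplicative.toAdd (φ (cls b (rot b (Multiplicative.toAdd k)))) : ℤ) : ℂ) =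
        ((Multiplicative.toAdd k : ℤ) : ℂ) := by
      apply mul_right_cancel₀ hpi
      rw [← this]
      push_cast
      ring
    exact Multiplicative.toAdd.injective (by exact_mod_cast h2)
  refine ⟨b, f b, ⟨MulEquiv.ofBijective (π.prod φ) ⟨?_, ?_⟩⟩⟩
  · rw [injective_iff_map_eq_one]
    intro g hg
    have h1 : π g = 1 := congrArg Prod.fst hg
    have h2 : φ g = 1 := congrArg Prod.snd hg
    obtain ⟨k, rfl⟩ := hker g h1
    rw [hφψ] at h2
    rw [h2, map_one]
  · rintro ⟨h, k⟩
    obtain ⟨g, rfl⟩ := hsurj h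
    refine ⟨g * ψ ((φ g)⁻¹ * k), ?_⟩
    rw [MonoidHom.prod_apply, map_mul π, map_mul φ, hπψ, hφψ, mul_one, mul_inv_cancel_left]

theorem core (hm : Function.Injective m) (hy : ∀ p ∈ FF m c, p.2 ≠ 0) (b : FF m c) (b' : XX m c) :
    Nonempty (FundamentalGroup (FF m c) b ≃*
      (FundamentalGroup (XX m c) b' × Multiplicative ℤ)) := by
  have : PathConnectedSpace (XX m c) := isPathConnected_iff_pathConnectedSpace.1 (XX_pc hy)
  obtain ⟨b₁, b₁', ⟨e⟩⟩ := core_base hm hy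
  exact ⟨(FundamentalGroup.fundamentalGroupMulEquivOfPathConnected b b₁).trans
    (e.trans ((FundamentalGroup.fundamentalGroupMulEquivOfPathConnected b₁' b').prodCongr
      (MulEquiv.refl _)))⟩

end core
end SL

namespace SL
open Set Topology Filter

theorem mapOfEq_inv {X Y : Type*} [TopologicalSpace X] [TopologicalSpace Y] (f : C(X, Y))
    (g : C(Y, X)) (h : ∀ x, g (f x) = x) {x : X} {y : Y} (hx : f x = y) (hy : g y = x)
    (p : FundamentalGroup X x) :
    FundamentalGroup.mapOfEq g hy (FundamentalGroup.mapOfEq f hx p) = p := by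
  rw [FundamentalGroup.mapOfEq_apply, FundamentalGroup.mapOfEq_apply]
  obtain ⟨P, hP⟩ := Path.Homotopic.Quotient.mk_surjective (FundamentalGroup.toPath p)
  have hP' : p = Path.Homotopic.Quotient.mk P := hP.symm
  rw [hP', ← Path.Homotopic.Quotient.mk_map, ← Path.Homotopic.Quotient.mk_cast,
    ← Path.Homotopic.Quotient.mk_map, ← Path.Homotopic.Quotient.mk_cast]
  congr 1
  ext t
  simp [h]

theorem homeo_pi1 {X Y : Type*} [TopologicalSpace X] [TopologicalSpace Y] (e : X ≃ₜ Y) (x : X) :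
    Nonempty (FundamentalGroup X x ≃* FundamentalGroup Y (e x)) := by
  let f : C(X, Y) := ⟨e, e.continuous⟩
  let g : C(Y, X) := ⟨e.symm, e.symm.continuous⟩
  have hx : f x = e x := rfl
  have hy : g (e x) = x := e.symm_apply_apply x
  exact ⟨MulEquiv.ofBijective (FundamentalGroup.mapOfEq f hx)
    ⟨Function.LeftInverse.injective (g := FundamentalGroup.mapOfEq g hy)
      (mapOfEq_inv f g (fun x => e.symm_apply_apply x) hx hy),
    Function.RightInverse.surjective (g := FundamentalGroup.mapOfEq g hy)
      (mapOfEq_inv g f (fun x => e.apply_symm_apply x) hy hx)⟩⟩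

theorem fin3_cases : ∀ i j k l : Fin 3, i ≠ j → i ≠ k → j ≠ k → l = i ∨ l = j ∨ l = k := by
  decide

/-- the quotient map -/
noncomputable def pr (v : {v : Fin 3 → ℂ // v ≠ 0}) : CP2 := Projectivization.mk ℂ v.1 v.2

theorem pr_quot : IsQuotientMap pr := isQuotientMap_quotient_mk'

theorem pr_rep (v : {v : Fin 3 → ℂ // v ≠ 0}) : ∃ t : ℂ, t ≠ 0 ∧ (pr v).rep = t • v.1 := by
  obtain ⟨a, ha⟩ := Projectivization.exists_smul_eq_mk_rep ℂ v.1 v.2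
  exact ⟨a, a.ne_zero, ha.symm⟩

theorem form_pr (ξ : (Fin 3 → ℂ) →ₗ[ℂ] ℂ) (v : {v : Fin 3 → ℂ // v ≠ 0}) :
    ξ (pr v).rep = 0 ↔ ξ v.1 = 0 := by
  obtain ⟨t, ht, e⟩ := pr_rep v
  rw [e, map_smul, smul_eq_mul, mul_eq_zero]
  exact or_iff_right ht

theorem form_div (ξ η : (Fin 3 → ℂ) →ₗ[ℂ] ℂ) (v : {v : Fin 3 → ℂ // v ≠ 0}) :
    ξ (pr v).rep / η (pr v).rep = ξ v.1 / η v.1 := by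
  obtain ⟨t, ht, e⟩ := pr_rep v
  rw [e, map_smul, map_smul, smul_eq_mul, smul_eq_mul, mul_div_mul_left _ _ ht]

theorem chart (B : Module.Basis (Fin 3) ℂ (Fin 3 → ℂ)) (i j k : Fin 3) (hij : i ≠ j) (hik : i ≠ k)
    (hjk : j ≠ k) (U : CP2 → Prop)
    (P : Set (ℂ × ℂ)) (hU : ∀ x, U x → B.coord k x.rep ≠ 0)
    (hUP : ∀ x : CP2, B.coord k x.rep ≠ 0 →
      (U x ↔ (B.coord i x.rep / B.coord k x.rep, B.coord j x.rep / B.coord k x.rep) ∈ P)) :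
    Nonempty ({x : CP2 // U x} ≃ₜ P) := by
  let g : CP2 → ℂ × ℂ := fun x =>
    (B.coord i x.rep / B.coord k x.rep, B.coord j x.rep / B.coord k x.rep)
  have cont : ∀ ξ : (Fin 3 → ℂ) →ₗ[ℂ] ℂ, Continuous ξ := fun ξ => ξ.continuous_of_finiteDimensional
  have hs : IsOpen {x : CP2 | B.coord k x.rep ≠ 0} := by
    rw [← pr_quot.isOpen_preimage]
    have : pr ⁻¹' {x : CP2 | B.coord k x.rep ≠ 0} = {v | B.coord k v.1 ≠ 0} := by
      ext v; exact not_congr (form_pr _ v)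
    rw [this]
    exact isOpen_ne_fun ((cont _).comp continuous_subtype_val) continuous_const
  have hg : ContinuousOn g {x : CP2 | B.coord k x.rep ≠ 0} := by
    rw [pr_quot.continuousOn_isOpen_iff hs]
    have : g ∘ pr = fun v => (B.coord i v.1 / B.coord k v.1, B.coord j v.1 / B.coord k v.1) := by
      ext1 v; simp only [Function.comp, g, form_div]
    rw [this]
    have h0 : ∀ v ∈ pr ⁻¹' {x : CP2 | B.coord k x.rep ≠ 0}, B.coord k v.1 ≠ 0 := by
      intro v hv h; exact hv ((form_pr _ v).2 h)
    exact (ContinuousOn.div ((cont _).comp continuous_subtype_val).continuousOn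
      ((cont _).comp continuous_subtype_val).continuousOn h0).prodMk
      (ContinuousOn.div ((cont _).comp continuous_subtype_val).continuousOn
      ((cont _).comp continuous_subtype_val).continuousOn h0)
  let w : ℂ × ℂ → (Fin 3 → ℂ) := fun p => p.1 • B i + p.2 • B j + B k
  have wk : ∀ p, B.coord k (w p) = 1 := fun p => by
    simp [w, Finsupp.single_apply, hik, hjk]
  have wi : ∀ p, B.coord i (w p) = p.1 := fun p => by
    simp [w, Finsupp.single_apply, hij.symm, hik.symm]
  have wj : ∀ p, B.coord j (w p) = p.2 := fun p => by
    simp [w, Finsupp.single_apply, hij, hjk.symm]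
  have w0 : ∀ p, w p ≠ 0 := fun p h => by
    have := wk p; rw [h, map_zero] at this; exact zero_ne_one this
  let inv : ℂ × ℂ → CP2 := fun p => pr ⟨w p, w0 p⟩
  have hinv : Continuous inv := pr_quot.continuous.comp
    (Continuous.subtype_mk (by fun_prop) _)
  have ginv : ∀ p, g (inv p) = p := by
    intro p
    simp only [g, inv, form_div, wk, wi, wj, div_one]
  have sinv : ∀ p, B.coord k (inv p).rep ≠ 0 := by
    intro p h
    have := (form_pr _ _).1 h
    simp only [wk] at this
    exact one_ne_zero this
  have invg : ∀ x : CP2, B.coord k x.rep ≠ 0 → inv (g x) = x := by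
    intro x hx
    conv_rhs => rw [← Projectivization.mk_rep x]
    simp only [inv, pr]
    rw [Projectivization.mk_eq_mk_iff']
    refine ⟨(B.coord k x.rep)⁻¹, ?_⟩
    refine B.ext_elem fun l => ?_
    have hl : l = i ∨ l = j ∨ l = k := fin3_cases i j k l hij hik hjk
    have e : ∀ v, B.repr v l = B.coord l v := fun v => rfl
    rw [e, e, map_smul, smul_eq_mul]
    rcases hl with rfl | rfl | rfl
    · rw [wi]; simp only [g]; rw [div_eq_inv_mul]
    · rw [wj]; simp only [g]; rw [div_eq_inv_mul]
    · rw [wk, inv_mul_cancel₀ hx]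
  refine ⟨⟨⟨fun x => ⟨g x.1, (hUP x.1 (hU _ x.2)).1 x.2⟩, fun p => ⟨inv p.1,
    (hUP _ (sinv _)).2 (by show g (inv p.1) ∈ P; rw [ginv]; exact p.2)⟩, ?_, ?_⟩, ?_, ?_⟩⟩
  · intro x; exact Subtype.ext (invg _ (hU _ x.2))
  · intro p; exact Subtype.ext (ginv _)
  · exact Continuous.subtype_mk (hg.comp_continuous continuous_subtype_val fun x => hU _ x.2) _
  · exact Continuous.subtype_mk (hinv.comp continuous_subtype_val) _

/-- the linear form of a coefficient vector -/
noncomputable def frm (a : Fin 3 → ℂ) : (Fin 3 → ℂ) →ₗ[ℂ] ℂ where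
  toFun v := ∑ i, a i * v i
  map_add' v w := by simp [mul_add, Finset.sum_add_distrib]
  map_smul' t v := by
    simp only [Pi.smul_apply, smul_eq_mul, RingHom.id_apply, Finset.mul_sum]
    exact Finset.sum_congr rfl fun i _ => by ring

theorem frm_ne {a : Fin 3 → ℂ} (ha : a ≠ 0) : ∃ v, frm a v ≠ 0 := by
  by_contra! h
  apply ha
  ext i
  have := h (Pi.single i 1)
  simpa [frm, Pi.single_apply] using this

end SL

/-- If a projective line arrangement `𝓛 ⊂ ℂP²` equals `𝓛' ∪ {L₀}`,
where `L₀` is a simple line of `𝓛` (all intersection points of `𝓛` on `L₀` are double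
points) and `𝓛'` is nonempty, then `π₁(ℂP² \ 𝓛) ≅ π₁(ℂP² \ 𝓛') × ℤ`. -/
theorem projective_simple_line_splits_Z
    (L' : Finset (Set CP2)) (L₀ : Set CP2)
    (hL' : ∀ l ∈ L', IsProjLine l) (hL₀ : IsProjLine L₀)
    (hne : L₀ ∉ L') (hnonempty : L'.Nonempty)
    -- `L₀` is simple: a point of `L₀` lying on a line of `𝓛'` lies on no second line of `𝓛'`
    (hsimple : ∀ p ∈ L₀, ∀ l ∈ L', p ∈ l → ∀ l' ∈ L', p ∈ l' → l' = l)
    (x₀ : CP2) (hx₀ : ∀ l ∈ insert L₀ L', x₀ ∉ l) :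
    Nonempty
      (FundamentalGroup {x : CP2 // ∀ l ∈ insert L₀ L', x ∉ l} ⟨x₀, hx₀⟩ ≃*
        (FundamentalGroup {x : CP2 // ∀ l ∈ L', x ∉ l}
            ⟨x₀, fun l hl => hx₀ l (Finset.mem_insert_of_mem hl)⟩ ×
          Multiplicative ℤ)) := by
  obtain ⟨a₀, ha₀, rfl⟩ := hL₀
  choose! a ha hla using hL'
  obtain ⟨l0, hl0⟩ := hnonempty
  let Z := SL.frm a₀
  let A : Set CP2 → ((Fin 3 → ℂ) →ₗ[ℂ] ℂ) := fun l => SL.frm (a l)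
  have memA : ∀ l ∈ L', ∀ x : CP2, x ∈ l ↔ A l x.rep = 0 := by
    intro l hl x
    have := Set.ext_iff.1 (hla l hl) x
    exact this
  have memZ : ∀ x : CP2, x ∈ {x : CP2 | ∑ i, a₀ i * x.rep i = 0} ↔ Z x.rep = 0 := fun x => Iff.rfl
  obtain ⟨z, hz⟩ := SL.frm_ne ha₀
  have hz' : Z z ≠ 0 := hz
  -- the lines differ
  have hdiff : ∀ l ∈ L', ∃ v, Z v = 0 ∧ A l v ≠ 0 := by
    intro l hl
    by_contra! h
    apply hne
    have e : ∀ v, A l v = Z v / Z z * A l z := by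
      intro v
      have := h (v - (Z v / Z z) • z) (by
        rw [map_sub, map_smul, smul_eq_mul, div_mul_cancel₀ _ hz', sub_self])
      rw [map_sub, map_smul, smul_eq_mul] at this
      linear_combination this
    have hAz : A l z ≠ 0 := by
      intro h0
      obtain ⟨v, hv⟩ := SL.frm_ne (ha l hl)
      apply hv
      have := e v
      rw [h0, mul_zero] at this
      exact this
    have : {x : CP2 | ∑ i, a₀ i * x.rep i = 0} = l := by
      ext x
      rw [memZ, memA l hl, e]
      simp [hz', hAz]
    rw [this]; exact hl
  -- the vector `e2`
  obtain ⟨f2, hf2Z, hf2⟩ : ∃ v, Z v = 0 ∧ ∀ l ∈ L', A l v ≠ 0 := by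
    by_contra! h
    have hcov : ⋃ l : {l // l ∈ L'}, ((LinearMap.ker ((A l.1).domRestrict (LinearMap.ker Z)) :
        Submodule ℂ (LinearMap.ker Z)) : Set (LinearMap.ker Z)) = Set.univ := by
      ext v
      obtain ⟨l, hl, h0⟩ := h v.1 v.2
      simp only [Set.mem_iUnion, Set.mem_univ, iff_true]
      exact ⟨⟨l, hl⟩, h0⟩
    obtain ⟨l, hl⟩ := Subspace.exists_eq_top_of_iUnion_eq_univ hcov
    obtain ⟨v, hv, hv'⟩ := hdiff l.1 l.2
    apply hv'
    have : (⟨v, hv⟩ : LinearMap.ker Z) ∈ LinearMap.ker ((A l.1).domRestrict (LinearMap.ker Z)) := by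
      rw [hl]; trivial
    exact this
  let Y := A l0
  have hYf : Y f2 ≠ 0 := hf2 l0 hl0
  obtain ⟨e2, he2⟩ : ∃ e2, e2 = (Y f2)⁻¹ • f2 := ⟨_, rfl⟩
  have Ye2 : Y e2 = 1 := by rw [he2, map_smul, smul_eq_mul, inv_mul_cancel₀ hYf]
  have Ze2 : Z e2 = 0 := by rw [he2, map_smul, hf2Z, smul_zero]
  have Ae2 : ∀ l ∈ L', A l e2 ≠ 0 := fun l hl => by
    rw [he2, map_smul, smul_eq_mul]
    exact mul_ne_zero (inv_ne_zero hYf) (hf2 l hl)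
  obtain ⟨e1, he1, he10⟩ : ∃ e1, e1 ∈ LinearMap.ker (Z.prod Y) ∧ e1 ≠ 0 := by
    have : LinearMap.ker (Z.prod Y) ≠ ⊥ := LinearMap.ker_ne_bot_of_finrank_lt (by simp)
    exact (Submodule.ne_bot_iff _).1 this
  have Ze1 : Z e1 = 0 := congrArg Prod.fst he1
  have Ye1 : Y e1 = 0 := congrArg Prod.snd he1
  obtain ⟨e3, he3⟩ : ∃ e3, e3 = (Z z)⁻¹ • z - Y ((Z z)⁻¹ • z) • e2 := ⟨_, rfl⟩
  have Ze3 : Z e3 = 1 := by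
    rw [he3, map_sub, map_smul, map_smul, Ze2, smul_eq_mul, inv_mul_cancel₀ hz', smul_zero, sub_zero]
  have Ye3 : Y e3 = 0 := by
    rw [he3, map_sub, map_smul Y _ e2, Ye2, smul_eq_mul, mul_one, sub_self]
  have hli : LinearIndependent ℂ ![e1, e2, e3] := by
    rw [Fintype.linearIndependent_iff]
    intro g hg
    simp only [Fin.sum_univ_three, Matrix.cons_val_zero, Matrix.cons_val_one, Matrix.cons_val] at hg
    have h2 : g 2 = 0 := by
      have := congrArg Z hg
      simpa [Ze1, Ze2, Ze3] using this
    have h1 : g 1 = 0 := by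
      have := congrArg Y hg
      simpa [Ye1, Ye2, Ye3] using this
    have h0 : g 0 = 0 := by
      rw [h1, h2] at hg
      simpa [he10] using hg
    intro i
    fin_cases i <;> assumption
  let B := basisOfLinearIndependentOfCardEqFinrank hli (by simp)
  have B0 : B 0 = e1 := by simp [B]
  have B1 : B 1 = e2 := by simp [B]
  have B2 : B 2 = e3 := by simp [B]
  have hexp : ∀ (T : (Fin 3 → ℂ) →ₗ[ℂ] ℂ) v,
      T v = B.coord 0 v * T e1 + B.coord 1 v * T e2 + B.coord 2 v * T e3 := by
    intro T v
    conv_lhs => rw [← B.sum_repr v]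
    simp only [Fin.sum_univ_three, map_add, map_smul, smul_eq_mul, B0, B1, B2, Module.Basis.coord_apply]
  have hZ : ∀ v, Z v = B.coord 2 v := fun v => by rw [hexp Z v, Ze1, Ze2, Ze3]; ring
  have hY : ∀ v, Y v = B.coord 1 v := fun v => by rw [hexp Y v, Ye1, Ye2, Ye3]; ring
  let m : {l // l ∈ L'} → ℂ := fun l => -A l.1 e1 / A l.1 e2
  let c : {l // l ∈ L'} → ℂ := fun l => -A l.1 e3 / A l.1 e2
  have hA : ∀ l : {l // l ∈ L'}, ∀ v, A l.1 v =
      A l.1 e2 * (B.coord 1 v - m l * B.coord 0 v - c l * B.coord 2 v) := by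
    intro l v
    rw [hexp (A l.1) v]
    have := Ae2 l.1 l.2
    simp only [m, c]
    field_simp
    ring
  have hm : Function.Injective m := by
    intro l l' h
    have hv : e1 + m l • e2 ≠ 0 := by
      intro h0
      have h1 := congrArg Y h0
      rw [map_add, map_smul, Ye1, Ye2, map_zero, zero_add, smul_eq_mul, mul_one] at h1
      rw [h1, zero_smul, add_zero] at h0
      exact he10 h0
    have key : ∀ l₁ : {l // l ∈ L'}, m l = m l₁ → SL.pr ⟨_, hv⟩ ∈ l₁.1 := by
      intro l₁ h₁
      rw [memA l₁.1 l₁.2, SL.form_pr]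
      show A l₁.1 (e1 + m l • e2) = 0
      rw [h₁, map_add, map_smul, smul_eq_mul]
      have := Ae2 l₁.1 l₁.2
      simp only [m]
      field_simp
      ring
    have hp0 : SL.pr ⟨_, hv⟩ ∈ {x : CP2 | ∑ i, a₀ i * x.rep i = 0} := by
      rw [memZ, SL.form_pr]
      show Z (e1 + m l • e2) = 0
      rw [map_add, map_smul, Ze1, Ze2, smul_zero, add_zero]
    exact Subtype.ext (hsimple _ hp0 l'.1 l'.2 (key l' h) l.1 l.2 (key l rfl))
  have hy : ∀ p ∈ SL.FF m c, p.2 ≠ 0 := by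
    intro p hp h
    apply hp ⟨l0, hl0⟩
    have h1 : A l0 e1 = 0 := Ye1
    have h3 : A l0 e3 = 0 := Ye3
    simp only [m, c, h1, h3, h]
    simp
  obtain ⟨E1⟩ := SL.chart B 0 1 2 (by decide) (by decide) (by decide)
    (fun x => ∀ l ∈ insert {x : CP2 | ∑ i, a₀ i * x.rep i = 0} L', x ∉ l) (SL.FF m c)
    (fun x hx h => hx _ (Finset.mem_insert_self _ _) ((memZ x).2 (by rw [hZ]; exact h)))
    (fun x hx => by
      constructor
      · intro h l he
        apply h l.1 (Finset.mem_insert_of_mem l.2)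
        rw [memA l.1 l.2, hA]
        simp only at he
        field_simp at he
        rw [he]; ring
      · intro h l hl hxl
        rcases Finset.mem_insert.1 hl with rfl | hl
        · exact hx (by rw [← hZ]; exact hxl)
        · apply h ⟨l, hl⟩
          rw [memA l hl, hA ⟨l, hl⟩] at hxl
          have := (mul_eq_zero.1 hxl).resolve_left (Ae2 l hl)
          simp only
          field_simp
          linear_combination this)
  obtain ⟨E2⟩ := SL.chart B 0 2 1 (by decide) (by decide) (by decide)
    (fun x => ∀ l ∈ L', x ∉ l) (SL.XX m c)
    (fun x hx h => hx l0 hl0 ((memA l0 hl0 x).2 (by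
      have := hY x.rep
      rw [h] at this; exact this)))
    (fun x hx => by
      constructor
      · intro h l he
        apply h l.1 l.2
        rw [memA l.1 l.2, hA]
        simp only at he
        field_simp at he
        rw [he]; ring
      · intro h l hl hxl
        apply h ⟨l, hl⟩
        rw [memA l hl, hA ⟨l, hl⟩] at hxl
        have := (mul_eq_zero.1 hxl).resolve_left (Ae2 l hl)
        simp only
        field_simp
        linear_combination this)
  obtain ⟨G1⟩ := SL.homeo_pi1 E1 ⟨x₀, hx₀⟩
  obtain ⟨G2⟩ := SL.homeo_pi1 E2 ⟨x₀, fun l hl => hx₀ l (Finset.mem_insert_of_mem hl)⟩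
  obtain ⟨G⟩ := SL.core hm hy (E1 ⟨x₀, hx₀⟩)
    (E2 ⟨x₀, fun l hl => hx₀ l (Finset.mem_insert_of_mem hl)⟩)
  exact ⟨G1.trans (G.trans (G2.symm.prodCongr (MulEquiv.refl _)))⟩
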